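/- arXiv:2506.19244 — 4 statements merged into one kernel-verified Lean document; each statement's English description precedes it below -/
import Mathlib

section
/- For any four affinely independent points A, B, C, D in ℝ³, the tetrahedron they span is stable on at least two of its four faces when the load point is the centroid (A + B + C + D)/4 of the vertices; that is, a homogeneous tetrahedron is gravitationally stable on at least two faces. -/
open RealInnerProductSpace

noncomputable section

abbrev E3 : Type := EuclideanSpace ℝ (Fin 3)

/-- The tetrahedron with load point `p` is *stable* on the face with vertices
`v₁, v₂, v₃`: the orthogonal projection of `p` onto the affine span of the face
lies in the relative (intrinsic) interior of the face. -/
def StableOn (p v₁ v₂ v₃ : E3) : Prop :=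
  ∃ q ∈ intrinsicInterior ℝ (convexHull ℝ ({v₁, v₂, v₃} : Set E3)),
    ∀ w ∈ (affineSpan ℝ ({v₁, v₂, v₃} : Set E3)).direction, ⟪p - q, w⟫ = 0

/-- Placed on the face with vertices `apex, e₁, e₂` and load point `p`, the
tetrahedron *tips over* the edge `e₁e₂` onto the adjacent face: the orthogonal
projection `q` of `p` onto the plane of the face lies strictly on the opposite
side of the line through `e₁, e₂` from the remaining vertex `apex`. -/
def TipsOver (p apex e₁ e₂ : E3) : Prop :=
  ∃ q ∈ affineSpan ℝ ({apex, e₁, e₂} : Set E3),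
    (∀ w ∈ (affineSpan ℝ ({apex, e₁, e₂} : Set E3)).direction, ⟪p - q, w⟫ = 0) ∧
    (affineSpan ℝ ({e₁, e₂} : Set E3)).SOppSide q apex

/-- The edge `PQ` of the tetrahedron `PQRS` is *obtuse*: writing `R'`, `S'` for
the components of `R - P`, `S - P` orthogonal to `Q - P`, we have `⟪R', S'⟫ < 0`. -/
def ObtuseEdge (P Q R S : E3) : Prop :=
  ⟪(R - P) - (⟪R - P, Q - P⟫ / ⟪Q - P, Q - P⟫) • (Q - P),
   (S - P) - (⟪S - P, Q - P⟫ / ⟪Q - P, Q - P⟫) • (Q - P)⟫ < 0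

/-- Stability on the `i`-th face of tetrahedron `ABCD` (the face opposite the
`i`-th vertex). -/
def FaceStable (A B C D p : E3) : Fin 4 → Prop
  | 0 => StableOn p B C D
  | 1 => StableOn p A C D
  | 2 => StableOn p A B D
  | 3 => StableOn p A B C

theorem stable_of_dual (Q0 Q1 Q2 Q3 g0 g1 g2 g3 : E3)
    (hs : g0 + g1 + g2 + g3 = 0)
    (hexp : ∀ v : E3, v = ⟪g0, v⟫ • Q0 + ⟪g1, v⟫ • Q1 + ⟪g2, v⟫ • Q2 + ⟪g3, v⟫ • Q3)
    (h12 : ⟪g0, Q1⟫ = ⟪g0, Q2⟫) (h13 : ⟪g0, Q1⟫ = ⟪g0, Q3⟫)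
    (h0 : 0 < ⟪g0, g0⟫)
    (k1 : ⟪g0, g1⟫ < ⟪g0, g0⟫) (k2 : ⟪g0, g2⟫ < ⟪g0, g0⟫) (k3 : ⟪g0, g3⟫ < ⟪g0, g0⟫)
    (p : E3) (hp : p = (4 : ℝ)⁻¹ • (Q0 + Q1 + Q2 + Q3)) :
    StableOn p Q1 Q2 Q3 := by
  have hsum : ∀ v : E3, ⟪g0, v⟫ + ⟪g1, v⟫ + ⟪g2, v⟫ + ⟪g3, v⟫ = 0 := by
    intro v
    rw [← inner_add_left, ← inner_add_left, ← inner_add_left, hs, inner_zero_left]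
  have hdir : ∀ w ∈ (affineSpan ℝ ({Q1, Q2, Q3} : Set E3)).direction, ⟪g0, w⟫ = 0 := by
    intro w hw
    rw [direction_affineSpan, vectorSpan_def] at hw
    induction hw using Submodule.span_induction with
    | mem x hx =>
      obtain ⟨a, ha, b, hb, rfl⟩ := hx
      simp only [Set.mem_insert_iff, Set.mem_singleton_iff] at ha hb
      simp only [vsub_eq_sub, inner_sub_right]
      rcases ha with rfl | rfl | rfl <;> rcases hb with rfl | rfl | rfl <;> linarith
    | zero => simp
    | add x y _ _ hx hy => rw [inner_add_right, hx, hy, add_zero]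
    | smul a x _ hx => rw [inner_smul_right, hx, mul_zero]
  have hull : ∀ a b c : ℝ, 0 < a → 0 < b → 0 < c → a + b + c = 1 →
      a • Q1 + b • Q2 + c • Q3 ∈ convexHull ℝ ({Q1, Q2, Q3} : Set E3) := by
    intro a b c ha hb hc habc
    have hc' := convex_convexHull ℝ ({Q1, Q2, Q3} : Set E3)
    have m1 : Q1 ∈ convexHull ℝ ({Q1, Q2, Q3} : Set E3) := subset_convexHull ℝ _ (by simp)
    have m2 : Q2 ∈ convexHull ℝ ({Q1, Q2, Q3} : Set E3) := subset_convexHull ℝ _ (by simp)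
    have m3 : Q3 ∈ convexHull ℝ ({Q1, Q2, Q3} : Set E3) := subset_convexHull ℝ _ (by simp)
    have := hc'.sum_mem (t := Finset.univ) (w := ![a, b, c]) (z := ![Q1, Q2, Q3])
      (by intro i _; fin_cases i <;> simp <;> linarith)
      (by simp [Fin.sum_univ_three]; linarith)
      (by intro i _; fin_cases i <;> simpa)
    simpa [Fin.sum_univ_three] using this
  set N := ⟪g0, g0⟫ with hN
  have hw : ∀ t : ℝ, t < N → 0 < 1/4 - t / (4 * N) := by
    intro t ht
    have : t / (4 * N) < 1/4 := by
      rw [div_lt_iff₀ (by positivity)]; linarith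
    linarith
  obtain ⟨w1, hw1⟩ : ∃ w, w = 1/4 - ⟪g0, g1⟫ / (4 * N) := ⟨_, rfl⟩
  obtain ⟨w2, hw2⟩ : ∃ w, w = 1/4 - ⟪g0, g2⟫ / (4 * N) := ⟨_, rfl⟩
  obtain ⟨w3, hw3⟩ : ∃ w, w = 1/4 - ⟪g0, g3⟫ / (4 * N) := ⟨_, rfl⟩
  have p1 : 0 < w1 := hw1 ▸ hw _ k1
  have p2 : 0 < w2 := hw2 ▸ hw _ k2
  have p3 : 0 < w3 := hw3 ▸ hw _ k3
  have e := hsum g0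
  rw [real_inner_comm g0 g1, real_inner_comm g0 g2, real_inner_comm g0 g3, ← hN] at e
  have hw1s : w1 + w2 + w3 = 1 := by
    rw [hw1, hw2, hw3]
    field_simp
    linarith
  obtain ⟨q, hq⟩ : ∃ q, q = w1 • Q1 + w2 • Q2 + w3 • Q3 := ⟨_, rfl⟩
  have hqh : q ∈ convexHull ℝ ({Q1, Q2, Q3} : Set E3) := hq ▸ hull _ _ _ p1 p2 p3 hw1s
  have hpq : p - q = (1 / (4 * N)) • g0 := by
    conv_rhs => rw [hexp g0]
    rw [real_inner_comm g0 g1, real_inner_comm g0 g2, real_inner_comm g0 g3, ← hN, hq, hp,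
      hw1, hw2, hw3]
    have : (1 / (4 * N)) * N = 1/4 := by field_simp
    simp only [smul_add, smul_smul, this]
    module
  have hqs : q ∈ affineSpan ℝ ({Q1, Q2, Q3} : Set E3) := convexHull_subset_affineSpan _ hqh
  refine ⟨q, ?_, fun w hw => by rw [hpq, inner_smul_left, hdir w hw, mul_zero]⟩
  rw [mem_intrinsicInterior]
  have hqs' : q ∈ affineSpan ℝ (convexHull ℝ ({Q1, Q2, Q3} : Set E3)) := by
    rwa [affineSpan_convexHull]
  refine ⟨⟨q, hqs'⟩, ?_, rfl⟩
  rw [mem_interior]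
  refine ⟨{x | 0 < w1 + ⟪g1, (x : E3) - q⟫ ∧ 0 < w2 + ⟪g2, (x : E3) - q⟫ ∧
    0 < w3 + ⟪g3, (x : E3) - q⟫}, ?_, ?_, ?_⟩
  · rintro ⟨x, hx⟩ ⟨x1, x2, x3⟩
    rw [affineSpan_convexHull] at hx
    have hz : ⟪g0, x - q⟫ = 0 := hdir _ (AffineSubspace.vsub_mem_direction hx hqs)
    have hx' := hexp (x - q)
    have hsx := hsum (x - q)
    rw [hz] at hx' hsx
    have : x = (w1 + ⟪g1, x - q⟫) • Q1 + (w2 + ⟪g2, x - q⟫) • Q2 + (w3 + ⟪g3, x - q⟫) • Q3 := by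
      calc x = q + (x - q) := by abel
        _ = q + _ := by rw [hx']
        _ = _ := by
          generalize ⟪g1, x - q⟫ = a, ⟪g2, x - q⟫ = b, ⟪g3, x - q⟫ = c
          rw [hq]; module
    show x ∈ convexHull ℝ ({Q1, Q2, Q3} : Set E3)
    rw [this]
    exact hull _ _ _ x1 x2 x3 (by linarith)
  · refine IsOpen.and ?_ (IsOpen.and ?_ ?_) <;>
    exact isOpen_lt continuous_const (by fun_prop)
  · simp [p1, p2, p3]

theorem exists_dual (A B C D : E3) (h : AffineIndependent ℝ ![A, B, C, D]) :
    ∃ a b c d : E3, a + b + c + d = 0 ∧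
      (∀ v : E3, v = ⟪a, v⟫ • A + ⟪b, v⟫ • B + ⟪c, v⟫ • C + ⟪d, v⟫ • D) ∧
      ⟪a, B - A⟫ = -1 ∧ ⟪a, C - A⟫ = -1 ∧ ⟪a, D - A⟫ = -1 ∧
      ⟪b, B - A⟫ = 1 ∧ ⟪b, C - A⟫ = 0 ∧ ⟪b, D - A⟫ = 0 ∧
      ⟪c, B - A⟫ = 0 ∧ ⟪c, C - A⟫ = 1 ∧ ⟪c, D - A⟫ = 0 ∧
      ⟪d, B - A⟫ = 0 ∧ ⟪d, C - A⟫ = 0 ∧ ⟪d, D - A⟫ = 1 := by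
  have hl : LinearIndependent ℝ ![B - A, C - A, D - A] := by
    rw [affineIndependent_iff_linearIndependent_vsub ℝ _ (0 : Fin 4)] at h
    have := h.comp (fun i : Fin 3 => (⟨i.succ, Fin.succ_ne_zero i⟩ : {x : Fin 4 // x ≠ 0}))
      (fun i j hij => by simpa using hij)
    have he : ![B - A, C - A, D - A] = (fun i : {x : Fin 4 // x ≠ 0} =>
        ![A, B, C, D] i -ᵥ ![A, B, C, D] 0) ∘
        (fun i : Fin 3 => (⟨i.succ, Fin.succ_ne_zero i⟩ : {x : Fin 4 // x ≠ 0})) := by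
      ext i : 1
      fin_cases i <;> rfl
    rw [he]
    exact this
  let bs : Module.Basis (Fin 3) ℝ E3 := basisOfLinearIndependentOfCardEqFinrank hl (by simp)
  have hb : ⇑bs = ![B - A, C - A, D - A] := coe_basisOfLinearIndependentOfCardEqFinrank hl _
  have hb0 : bs 0 = B - A := by rw [hb]; rfl
  have hb1 : bs 1 = C - A := by rw [hb]; rfl
  have hb2 : bs 2 = D - A := by rw [hb]; rfl
  let g : Fin 3 → E3 := fun i =>
    (InnerProductSpace.toDual ℝ E3).symm (LinearMap.toContinuousLinearMap (bs.coord i))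
  have hg : ∀ i v, ⟪g i, v⟫ = bs.repr v i := by
    intro i v
    simp [g]
  have key : ∀ i j, ⟪g i, bs j⟫ = if j = i then 1 else 0 := by
    intro i j; rw [hg, bs.repr_self, Finsupp.single_apply]
  refine ⟨-(g 0 + g 1 + g 2), g 0, g 1, g 2, by abel, ?_, ?_⟩
  · intro v
    have := bs.sum_repr v
    rw [Fin.sum_univ_three, hb0, hb1, hb2, ← hg, ← hg, ← hg] at this
    simp only [inner_neg_left, inner_add_left]
    conv_lhs => rw [← this]
    module
  · rw [← hb0, ← hb1, ← hb2]
    simp only [inner_neg_left, inner_add_left, key]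
    simp

theorem gram_upper {x y : E3} (hxy : x ≠ y) : 2 * ⟪x, y⟫ < ⟪x, x⟫ + ⟪y, y⟫ := by
  have h : 0 < ⟪x - y, x - y⟫ := real_inner_self_pos.2 (sub_ne_zero.2 hxy)
  rw [real_inner_sub_sub_self] at h
  linarith

theorem gram_lower (x y : E3) : 0 ≤ 2 * ⟪x, y⟫ + ⟪x, x⟫ + ⟪y, y⟫ := by
  have h : 0 ≤ ⟪x + y, x + y⟫ := real_inner_self_nonneg
  rw [real_inner_add_add_self] at h
  linarith

/-- If the first three vectors are sorted by norm and the fourth is smallest, then the first is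
stable, and one of the second and third is. -/
theorem gram_sorted (P : Fin 4 → Prop) (G : Fin 4 → Fin 4 → ℝ)
    (hP : ∀ i, (∀ j, j ≠ i → G i j < G i i) → P i)
    (hsymm : ∀ i j, G i j = G j i)
    (hpos : ∀ i, 0 < G i i)
    (hrow : ∀ i, ∑ j, G i j = 0)
    (hu : ∀ i j, i ≠ j → 2 * G i j < G i i + G j j)
    (hl : ∀ i j, 0 ≤ 2 * G i j + G i i + G j j) :
    ∃ i j : Fin 4, i ≠ j ∧ P i ∧ P j := by
  obtain ⟨σ, hσ⟩ : ∃ σ : Equiv.Perm (Fin 4), Monotone ((fun i => G i i) ∘ σ) :=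
    ⟨Tuple.sort _, Tuple.monotone_sort _⟩
  have m01 : G (σ 0) (σ 0) ≤ G (σ 1) (σ 1) := hσ (by decide)
  have m12 : G (σ 1) (σ 1) ≤ G (σ 2) (σ 2) := hσ (by decide)
  have m23 : G (σ 2) (σ 2) ≤ G (σ 3) (σ 3) := hσ (by decide)
  have hrow' : ∀ i, G i (σ 0) + G i (σ 1) + G i (σ 2) + G i (σ 3) = 0 := by
    intro i
    rw [← hrow i, ← Equiv.sum_comp σ, Fin.sum_univ_four]
  have hst : ∀ i, (∀ j, j ≠ i → G (σ i) (σ j) < G (σ i) (σ i)) → P (σ i) := by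
    intro i hi
    apply hP
    intro j hj
    have := hi (σ.symm j) (by rintro rfl; simp at hj)
    simpa using this
  have hle : ∀ i j, j ≠ i → G (σ j) (σ j) ≤ G (σ i) (σ i) → G (σ i) (σ j) < G (σ i) (σ i) := by
    intro i j hij h1
    have := hu (σ i) (σ j) (fun h => hij (σ.injective h).symm)
    linarith
  have h3 : P (σ 3) := hst 3 fun j hj => hle _ _ hj (hσ (Fin.le_last j))
  by_cases c2 : G (σ 2) (σ 3) < G (σ 2) (σ 2)
  · refine ⟨σ 3, σ 2, σ.injective.ne (by decide), h3, hst 2 ?_⟩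
    intro j hj
    fin_cases j
    · exact hle 2 0 hj (m01.trans m12)
    · exact hle 2 1 hj m12
    · exact absurd rfl hj
    · exact c2
  · refine ⟨σ 3, σ 1, σ.injective.ne (by decide), h3, hst 1 ?_⟩
    have r3 := hrow' (σ 3)
    have r2 := hrow' (σ 2)
    have s32 := hsymm (σ 3) (σ 2)
    have s31 := hsymm (σ 3) (σ 1)
    have s21 := hsymm (σ 2) (σ 1)
    have l30 := hl (σ 3) (σ 0)
    have l20 := hl (σ 2) (σ 0)
    have q1 := hpos (σ 1)
    have q2 := hpos (σ 2)
    intro j hj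
    fin_cases j
    · exact hle 1 0 hj m01
    · exact absurd rfl hj
    · show G (σ 1) (σ 2) < G (σ 1) (σ 1)
      by_contra hc
      linarith
    · show G (σ 1) (σ 3) < G (σ 1) (σ 1)
      by_contra hc
      linarith

/-- **A homogeneous tetrahedron is stable on at least two faces**: for any four
affinely independent points `A, B, C, D` in ℝ³, the tetrahedron loaded at the
vertex centroid `(A + B + C + D)/4` is stable on at least two of its four faces. -/
theorem homogeneous_tetrahedron_stable_on_two_faces (A B C D : E3)
    (h : AffineIndependent ℝ ![A, B, C, D]) :
    ∃ i j : Fin 4, i ≠ j ∧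
      FaceStable A B C D ((4 : ℝ)⁻¹ • (A + B + C + D)) i ∧
      FaceStable A B C D ((4 : ℝ)⁻¹ • (A + B + C + D)) j := by
  obtain ⟨a, b, c, d, hs, hexp, aB, aC, aD, bB, bC, bD, cB, cC, cD, dB, dC, dD⟩ :=
    exists_dual A B C D h
  have nab : a ≠ b := by rintro rfl; linarith
  have nac : a ≠ c := by rintro rfl; linarith
  have nad : a ≠ d := by rintro rfl; linarith
  have nbc : b ≠ c := by rintro rfl; linarith
  have nbd : b ≠ d := by rintro rfl; linarith
  have ncd : c ≠ d := by rintro rfl; linarith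
  have za : a ≠ 0 := by rintro rfl; simp at aB
  have zb : b ≠ 0 := by rintro rfl; simp at bB
  have zc : c ≠ 0 := by rintro rfl; simp at cC
  have zd : d ≠ 0 := by rintro rfl; simp at dD
  rw [inner_sub_right] at aB aC aD bB bC bD cB cC cD dB dC dD
  let g : Fin 4 → E3 := ![a, b, c, d]
  have ginj : ∀ i j, i ≠ j → g i ≠ g j := by
    intro i j hij
    fin_cases i <;> fin_cases j <;> first | exact absurd rfl hij | assumption | (apply Ne.symm; assumption)
  have gz : ∀ i, g i ≠ 0 := by
    intro i
    fin_cases i <;> assumption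
  refine gram_sorted _ (fun i j => ⟪g i, g j⟫) ?_ (fun i j => real_inner_comm _ _)
    (fun i => real_inner_self_pos.2 (gz i)) ?_ (fun i j hij => gram_upper (ginj i j hij))
    (fun i j => gram_lower _ _)
  · intro i hi
    fin_cases i
    · exact stable_of_dual A B C D a b c d hs hexp (by linarith) (by linarith)
        (real_inner_self_pos.2 za) (hi 1 (by decide)) (hi 2 (by decide)) (hi 3 (by decide)) _ rfl
    · exact stable_of_dual B A C D b a c d (by rw [← hs]; abel)
        (fun v => (hexp v).trans (by abel)) (by linarith) (by linarith)
        (real_inner_self_pos.2 zb) (hi 0 (by decide)) (hi 2 (by decide)) (hi 3 (by decide)) _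
        (by congr 1; abel)
    · exact stable_of_dual C A B D c a b d (by rw [← hs]; abel)
        (fun v => (hexp v).trans (by abel)) (by linarith) (by linarith)
        (real_inner_self_pos.2 zc) (hi 0 (by decide)) (hi 1 (by decide)) (hi 3 (by decide)) _
        (by congr 1; abel)
    · exact stable_of_dual D A B C d a b c (by rw [← hs]; abel)
        (fun v => (hexp v).trans (by abel)) (by linarith) (by linarith)
        (real_inner_self_pos.2 zd) (hi 0 (by decide)) (hi 1 (by decide)) (hi 2 (by decide)) _
        (by congr 1; abel)
  · intro i
    rw [← inner_sum]
    have : ∑ j, g j = 0 := by rw [Fin.sum_univ_four]; exact hs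
    rw [this, inner_zero_right]
end
end

section
/- No homogeneous tetrahedron is monostable: for any four affinely independent points A, B, C, D in ℝ³, it is not the case that the tetrahedron is stable on exactly one face when the load point is the vertex centroid (A + B + C + D)/4. -/
open RealInnerProductSpace

noncomputable section

theorem inner_lt_aux {x y : E3} (hn : ‖y‖ ≤ ‖x‖) (hne : y ≠ x) : ⟪x, y⟫ < ‖x‖ ^ 2 := by
  have h1 : 0 < ‖x - y‖ := norm_pos_iff.2 (sub_ne_zero.2 hne.symm)
  have h2 := norm_sub_sq_real x y
  have h3 : 0 < ‖x - y‖ ^ 2 := by positivity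
  have h4 : ‖y‖ ^ 2 ≤ ‖x‖ ^ 2 := by gcongr
  linarith

/-- Gradient of the barycentric coordinate. -/
def gradB (b : AffineBasis (Fin 4) ℝ E3) (i : Fin 4) : E3 :=
  (InnerProductSpace.toDual ℝ E3).symm (LinearMap.toContinuousLinearMap (b.coord i).linear)

theorem gradB_inner (b : AffineBasis (Fin 4) ℝ E3) (i : Fin 4) (w : E3) :
    ⟪gradB b i, w⟫ = (b.coord i).linear w := by
  simp [gradB, InnerProductSpace.toDual_symm_apply]

theorem gradB_sub (b : AffineBasis (Fin 4) ℝ E3) (i : Fin 4) (x y : E3) :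
    ⟪gradB b i, x - y⟫ = b.coord i x - b.coord i y := by
  rw [gradB_inner]
  have := (b.coord i).linearMap_vsub x y
  simpa using this

theorem coord_gradB (b : AffineBasis (Fin 4) ℝ E3) (i : Fin 4) (x w : E3) :
    b.coord i (x + w) = b.coord i x + ⟪gradB b i, w⟫ := by
  have := gradB_sub b i (x + w) x
  rw [add_sub_cancel_left] at this
  linarith

theorem gradB_sum (b : AffineBasis (Fin 4) ℝ E3) : ∑ i, gradB b i = 0 := by
  refine ext_inner_right ℝ fun w => ?_
  rw [sum_inner, inner_zero_left]
  have h1 := b.sum_coord_apply_eq_one (0 + w)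
  have h2 := b.sum_coord_apply_eq_one (0 : E3)
  simp only [coord_gradB, Finset.sum_add_distrib] at h1
  linarith

theorem gradB_ne (b : AffineBasis (Fin 4) ℝ E3) {i j : Fin 4} (hij : j ≠ i) :
    gradB b j ≠ gradB b i := by
  intro h
  have h1 := gradB_sub b i (b i) (b j)
  have h2 := gradB_sub b j (b i) (b j)
  rw [h, h1] at h2
  simp [AffineBasis.coord_apply, hij, hij.symm] at h2
  norm_num at h2

theorem gradB_ne_neg (b : AffineBasis (Fin 4) ℝ E3) {i j k : Fin 4} (hij : j ≠ i) (hk : k ≠ i)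
    (hkj : k ≠ j) : -gradB b j ≠ gradB b i := by
  intro h
  have h1 := gradB_sub b i (b i) (b k)
  have h2 := gradB_sub b j (b i) (b k)
  rw [← h, inner_neg_left, h2] at h1
  simp [AffineBasis.coord_apply, hij, hij.symm, hk, hk.symm, hkj, hkj.symm] at h1

theorem gradB_ne_zero (b : AffineBasis (Fin 4) ℝ E3) (i : Fin 4) : gradB b i ≠ 0 := by
  intro h
  obtain ⟨j, hj⟩ := exists_ne i
  have h1 := gradB_sub b i (b i) (b j)
  rw [h] at h1
  simp [AffineBasis.coord_apply, hj, hj.symm] at h1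

theorem coord_zero_of_mem (b : AffineBasis (Fin 4) ℝ E3) (i : Fin 4) {x : E3}
    (hx : x ∈ affineSpan ℝ (b '' {i}ᶜ)) : b.coord i x = 0 := by
  refine affineSpan_induction (p := fun y => b.coord i y = 0) hx ?_ ?_
  · rintro y ⟨j, hj, rfl⟩
    exact b.coord_apply_ne (Ne.symm hj)
  · intro c u v w hu hv hw
    rw [vsub_eq_sub, vadd_eq_add, add_comm, coord_gradB, inner_smul_right, gradB_sub, hu, hv, hw]
    simp

theorem mem_hull_of_coord (b : AffineBasis (Fin 4) ℝ E3) (i : Fin 4) {x : E3}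
    (h0 : b.coord i x = 0) (hp : ∀ j, j ≠ i → 0 ≤ b.coord j x) :
    x ∈ convexHull ℝ (b '' {i}ᶜ) := by
  have h1 := b.sum_coord_apply_eq_one x
  have h2 := b.linear_combination_coord_eq_self x
  rw [← Finset.sum_erase_add _ _ (Finset.mem_univ i), h0, add_zero] at h1
  rw [← Finset.sum_erase_add _ _ (Finset.mem_univ i), h0, zero_smul, add_zero] at h2
  rw [← h2]
  refine (convex_convexHull ℝ _).sum_mem (fun j hj => hp j (Finset.ne_of_mem_erase hj)) h1 ?_
  intro j hj
  exact subset_convexHull ℝ _ ⟨j, Finset.ne_of_mem_erase hj, rfl⟩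

theorem mem_intrinsicInterior_of_coord (b : AffineBasis (Fin 4) ℝ E3) (i : Fin 4) {x : E3}
    (h0 : b.coord i x = 0) (hp : ∀ j, j ≠ i → 0 < b.coord j x) :
    x ∈ intrinsicInterior ℝ (convexHull ℝ (b '' {i}ᶜ)) := by
  have hx := mem_hull_of_coord b i h0 (fun j hj => (hp j hj).le)
  rw [mem_intrinsicInterior]
  refine ⟨⟨x, subset_affineSpan ℝ _ hx⟩, ?_, rfl⟩
  rw [mem_interior]
  refine ⟨{y | ∀ j, j ≠ i → 0 < b.coord j (y : E3)}, ?_, ?_, hp⟩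
  · intro y hy
    have hy2 : (y : E3) ∈ affineSpan ℝ (b '' {i}ᶜ) :=
      (affineSpan_convexHull (𝕜 := ℝ) (b '' {i}ᶜ)).le y.2
    exact mem_hull_of_coord b i (coord_zero_of_mem b i hy2) (fun j hj => (hy j hj).le)
  · have : {y : affineSpan ℝ (convexHull ℝ (b '' {i}ᶜ)) | ∀ j, j ≠ i → 0 < b.coord j (y : E3)}
        = ⋂ j, ⋂ (_ : j ≠ i), {y : affineSpan ℝ (convexHull ℝ (b '' {i}ᶜ)) |
          0 < b.coord j (y : E3)} := by
      ext y; simp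
    rw [this]
    refine isOpen_iInter_of_finite fun j => isOpen_iInter_of_finite fun _ => ?_
    exact isOpen_lt continuous_const
      ((AffineMap.continuous_of_finiteDimensional _).comp continuous_subtype_val)

theorem stable_of_inner (b : AffineBasis (Fin 4) ℝ E3) (p : E3)
    (hpc : ∀ j, b.coord j p = 4⁻¹) (i : Fin 4)
    (hi : ∀ j, j ≠ i → ⟪gradB b i, gradB b j⟫ < ‖gradB b i‖ ^ 2) :
    ∃ q ∈ intrinsicInterior ℝ (convexHull ℝ (b '' {i}ᶜ)),
      ∀ w ∈ (affineSpan ℝ (b '' {i}ᶜ)).direction, ⟪p - q, w⟫ = 0 := by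
  have hg : 0 < ‖gradB b i‖ ^ 2 := by
    have := norm_pos_iff.2 (gradB_ne_zero b i)
    positivity
  refine ⟨p + (-(4⁻¹ / ‖gradB b i‖ ^ 2)) • gradB b i, mem_intrinsicInterior_of_coord b i ?_ ?_, ?_⟩
  · rw [coord_gradB, hpc, inner_smul_right, real_inner_self_eq_norm_sq]
    rw [neg_mul, div_mul_cancel₀ _ hg.ne', add_neg_cancel]
  · intro j hj
    rw [coord_gradB, hpc, inner_smul_right, real_inner_comm]
    have : ⟪gradB b i, gradB b j⟫ / ‖gradB b i‖ ^ 2 < 1 := (div_lt_one hg).2 (hi j hj)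
    have e : -(4⁻¹ / ‖gradB b i‖ ^ 2) * ⟪gradB b i, gradB b j⟫
        = -(4⁻¹ * (⟪gradB b i, gradB b j⟫ / ‖gradB b i‖ ^ 2)) := by ring
    rw [e]
    linarith
  · intro w hw
    have hz : ⟪gradB b i, w⟫ = 0 := by
      obtain ⟨j, hj⟩ := exists_ne i
      have hmem : b j ∈ affineSpan ℝ (b '' {i}ᶜ) := subset_affineSpan ℝ _ ⟨j, hj, rfl⟩
      have h1 := coord_zero_of_mem b i hmem
      have h2 := coord_zero_of_mem b i (AffineSubspace.vadd_mem_of_mem_direction hw hmem)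
      rw [vadd_eq_add, add_comm, coord_gradB, h1] at h2
      linarith
    have : p - (p + (-(4⁻¹ / ‖gradB b i‖ ^ 2)) • gradB b i)
        = (4⁻¹ / ‖gradB b i‖ ^ 2) • gradB b i := by
      rw [neg_smul]; abel
    rw [this, inner_smul_left, hz, mul_zero]

/-- The two faces of largest area satisfy the stability inequality. -/
theorem exists_two (b : AffineBasis (Fin 4) ℝ E3) : ∃ i k : Fin 4, i ≠ k ∧
    (∀ j, j ≠ i → ⟪gradB b i, gradB b j⟫ < ‖gradB b i‖ ^ 2) ∧
    (∀ j, j ≠ k → ⟪gradB b k, gradB b j⟫ < ‖gradB b k‖ ^ 2) := by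
  obtain ⟨i, -, hi⟩ := Finset.exists_max_image (Finset.univ : Finset (Fin 4))
    (fun i => ‖gradB b i‖) ⟨0, Finset.mem_univ _⟩
  obtain ⟨k, hk, hk'⟩ := Finset.exists_max_image (Finset.univ.erase i)
    (fun i => ‖gradB b i‖) (by
      obtain ⟨j, hj⟩ := exists_ne i
      exact ⟨j, by simpa using hj⟩)
  have hki : k ≠ i := Finset.ne_of_mem_erase hk
  refine ⟨i, k, hki.symm, fun j hj => inner_lt_aux (hi j (Finset.mem_univ _)) (gradB_ne b hj),
    fun j hj => ?_⟩
  by_cases hji : j = i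
  · subst hji
    have hs : ∑ l, ⟪gradB b k, gradB b l⟫ = 0 := by
      rw [← inner_sum, gradB_sum, inner_zero_right]
    rw [← Finset.sum_erase_add _ _ (Finset.mem_univ j), ← Finset.sum_erase_add _ _ hk,
      real_inner_self_eq_norm_sq] at hs
    have hc : ((Finset.univ.erase j).erase k).card = 2 := by
      rw [Finset.card_erase_of_mem hk, Finset.card_erase_of_mem (Finset.mem_univ _)]; simp
    have hlt : ∑ l ∈ (Finset.univ.erase j).erase k, (-‖gradB b k‖ ^ 2)
        < ∑ l ∈ (Finset.univ.erase j).erase k, ⟪gradB b k, gradB b l⟫ := by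
      refine Finset.sum_lt_sum_of_nonempty (Finset.card_pos.1 (by omega)) fun l hl => ?_
      have hlk := Finset.ne_of_mem_erase hl
      have hlj := Finset.mem_of_mem_erase hl
      have := inner_lt_aux (x := gradB b k) (y := -gradB b l)
        (by rw [norm_neg]; exact hk' l hlj)
        (gradB_ne_neg b hlk hki.symm (Finset.ne_of_mem_erase hlj).symm)
      rw [inner_neg_right] at this
      linarith
    rw [Finset.sum_const, hc, nsmul_eq_mul] at hlt
    push_cast at hlt
    linarith
  · exact inner_lt_aux (hk' j (Finset.mem_erase.2 ⟨hji, Finset.mem_univ _⟩)) (gradB_ne b hj)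

theorem homogeneous_tetrahedron_not_monostable (A B C D : E3)
    (h : AffineIndependent ℝ ![A, B, C, D]) :
    ¬ (∃! i : Fin 4, FaceStable A B C D ((4 : ℝ)⁻¹ • (A + B + C + D)) i) := by
  have htop : affineSpan ℝ (Set.range ![A, B, C, D]) = ⊤ := by
    rw [h.affineSpan_eq_top_iff_card_eq_finrank_add_one]
    simp
  let b : AffineBasis (Fin 4) ℝ E3 := ⟨![A, B, C, D], h, htop⟩
  have hb : (b : Fin 4 → E3) = ![A, B, C, D] := rfl
  have hpc : ∀ j, b.coord j ((4 : ℝ)⁻¹ • (A + B + C + D)) = 4⁻¹ := by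
    intro j
    have hs : ∑ l, (b.coord j (b l)) = 1 := by
      simp [AffineBasis.coord_apply]
    have hl : ∀ l, b.coord j (b l) = b.coord j 0 + ⟪gradB b j, b l⟫ := fun l => by
      rw [← coord_gradB, zero_add]
    have hp := coord_gradB b j 0 ((4 : ℝ)⁻¹ • (A + B + C + D))
    rw [zero_add] at hp
    rw [hp, inner_smul_right, inner_add_right, inner_add_right, inner_add_right]
    rw [Fin.sum_univ_four, hl, hl, hl, hl] at hs
    have k0 : b 0 = A := rfl
    have k1 : b 1 = B := rfl
    have k2 : b 2 = C := rfl
    have k3 : b 3 = D := rfl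
    rw [k0, k1, k2, k3] at hs
    linarith
  have hst : ∀ i, (∀ j, j ≠ i → ⟪gradB b i, gradB b j⟫ < ‖gradB b i‖ ^ 2) →
      FaceStable A B C D ((4 : ℝ)⁻¹ • (A + B + C + D)) i := by
    intro i hi
    have hmain := stable_of_inner b _ hpc i hi
    have e0 : b '' {0}ᶜ = {B, C, D} := by
      ext x; simp [hb, Fin.exists_fin_succ, eq_comm]
    have e1 : b '' {1}ᶜ = {A, C, D} := by
      ext x; simp [hb, Fin.exists_fin_succ, eq_comm]
    have e2 : b '' {2}ᶜ = {A, B, D} := by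
      ext x; simp [hb, Fin.exists_fin_succ, eq_comm]
    have e3 : b '' {3}ᶜ = {A, B, C} := by
      ext x; simp [hb, Fin.exists_fin_succ, eq_comm]
    match i, hmain with
    | 0, hm => rw [e0] at hm; exact hm
    | 1, hm => rw [e1] at hm; exact hm
    | 2, hm => rw [e2] at hm; exact hm
    | 3, hm => rw [e3] at hm; exact hm
  rintro ⟨m, -, hm⟩
  obtain ⟨i, k, hik, hi, hk⟩ := exists_two b
  exact hik ((hm i (hst i hi)).trans (hm k (hst k hk)).symm)
end
end

section
/- If a tetrahedron is loadable, i.e. there exists a point p in its interior such that the tetrahedron is stable on exactly one face with load p, then the tetrahedron has an obtuse path: its vertices can be labeled a, b, c, d so that the edges ab, bc and cd are all obtuse. -/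
open RealInnerProductSpace

noncomputable section

set_option maxHeartbeats 4000000 in
/-- Combinatorial core. -/
theorem comb_core (O : Fin 4 → Fin 4 → Prop) (d : Fin 4 → ℝ) (s : Fin 4)
    (hsym : ∀ i j, O i j → O j i)
    (hstep : ∀ i, i ≠ s → ∃ j, j ≠ i ∧ O i j ∧ d j < d i)
    (hstar : ∀ i, ∃ j, j ≠ i ∧ ¬ O i j) :
    ∃ σ : Equiv.Perm (Fin 4), O (σ 2) (σ 3) ∧ O (σ 0) (σ 3) ∧ O (σ 0) (σ 1) := by
  have key : ∀ a b c e : Fin 4, a ≠ b → a ≠ c → a ≠ e → b ≠ c → b ≠ e → c ≠ e →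
      O a b → O b c → O c e →
      ∃ σ : Equiv.Perm (Fin 4), O (σ 2) (σ 3) ∧ O (σ 0) (σ 3) ∧ O (σ 0) (σ 1) := by
    intro a b c e hab hac hae hbc hbe hce h1 h2 h3
    have hinj : Function.Injective ![c, e, a, b] := by
      intro x y hxy
      fin_cases x <;> fin_cases y <;> simp_all
    refine ⟨Equiv.ofBijective _ (Finite.injective_iff_bijective.mp hinj), ?_⟩
    simp only [Equiv.ofBijective_apply]
    exact ⟨h1, hsym _ _ h2, h3⟩
  obtain ⟨x, y, z, hsx, hsy, hsz, hxy, hxz, hyz, hall⟩ : ∃ x y z : Fin 4, s ≠ x ∧ s ≠ y ∧ s ≠ z ∧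
      x ≠ y ∧ x ≠ z ∧ y ≠ z ∧ ∀ t, t = s ∨ t = x ∨ t = y ∨ t = z := by
    clear hstep; revert s; decide
  obtain ⟨x', hx1, hx2, hx3⟩ := hstep x hsx.symm
  obtain ⟨y', hy1, hy2, hy3⟩ := hstep y hsy.symm
  obtain ⟨z', hz1, hz2, hz3⟩ := hstep z hsz.symm
  have sx := hsym _ _ hx2
  have sy := hsym _ _ hy2
  have sz := hsym _ _ hz2
  have star : ∀ t u v w : Fin 4, (∀ i, i = t ∨ i = u ∨ i = v ∨ i = w) →
      O t u → O t v → O t w → False := by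
    intro t u v w ht h1 h2 h3
    obtain ⟨j, hj, hj'⟩ := hstar t
    rcases ht j with rfl | rfl | rfl | rfl
    · exact hj rfl
    · exact hj' h1
    · exact hj' h2
    · exact hj' h3
  have hsx' := hsx.symm
  have hsy' := hsy.symm
  have hsz' := hsz.symm
  have hxy' := hxy.symm
  have hxz' := hxz.symm
  have hyz' := hyz.symm
  rcases hall x' with ex | ex | ex | ex <;> rcases hall y' with ey | ey | ey | ey <;>
  rcases hall z' with ez | ez | ez | ez <;> rw [ex] at hx1 hx2 hx3 sx <;>
  rw [ey] at hy1 hy2 hy3 sy <;> rw [ez] at hz1 hz2 hz3 sz <;> first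
    | exact absurd rfl hx1
    | exact absurd rfl hy1
    | exact absurd rfl hz1
    | (exfalso; linarith)
    | exact absurd (star s x y z hall (by assumption) (by assumption) (by assumption)) id
    | exact absurd (star x s y z (fun i => by have := hall i; tauto)
        (by assumption) (by assumption) (by assumption)) id
    | exact absurd (star y s x z (fun i => by have := hall i; tauto)
        (by assumption) (by assumption) (by assumption)) id
    | exact absurd (star z s x y (fun i => by have := hall i; tauto)
        (by assumption) (by assumption) (by assumption)) id
    | (apply key s x y z <;> assumption)
    | (apply key s x z y <;> assumption)
    | (apply key s y x z <;> assumption)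
    | (apply key s y z x <;> assumption)
    | (apply key s z x y <;> assumption)
    | (apply key s z y x <;> assumption)
    | (apply key x s y z <;> assumption)
    | (apply key x s z y <;> assumption)
    | (apply key x y s z <;> assumption)
    | (apply key x z s y <;> assumption)
    | (apply key y s x z <;> assumption)
    | (apply key y x s z <;> assumption)

/-- The stability criterion in barycentric coordinates. -/
theorem stable_of_coord (b : AffineBasis (Fin 4) ℝ E3) (g : Fin 4 → E3)
    (hg : ∀ i x y, ⟪g i, x - y⟫ = b.coord i x - b.coord i y) (p : E3) (i : Fin 4)
    (v₁ v₂ v₃ : E3) (hv : ({v₁, v₂, v₃} : Set E3) = b '' {i}ᶜ)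
    (hi : ⟪g i, g i⟫ ≠ 0)
    (hpos : ∀ j, j ≠ i → 0 < b.coord j p - b.coord i p / ⟪g i, g i⟫ * ⟪g j, g i⟫) :
    StableOn p v₁ v₂ v₃ := by
  unfold StableOn
  rw [hv]
  have hspan : ∀ x ∈ affineSpan ℝ (b '' {i}ᶜ), b.coord i x = 0 := by
    intro x hx
    refine affineSpan_induction (p := fun x => b.coord i x = 0) hx ?_ ?_
    · rintro _ ⟨j, hj, rfl⟩
      exact b.coord_apply_ne (fun h => hj h.symm)
    · intro c u v w hu hv hw
      rw [AffineMap.map_vadd, map_smul, AffineMap.linearMap_vsub, hu, hv, hw]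
      simp
  have hhull : ∀ x, b.coord i x = 0 → (∀ j, j ≠ i → 0 < b.coord j x) →
      x ∈ convexHull ℝ (b '' {i}ᶜ) := by
    intro x hx hx'
    have h1 : ∑ j, b.coord j x • b j = x := b.linear_combination_coord_eq_self x
    rw [← h1, ← Finset.add_sum_erase _ _ (Finset.mem_univ i), hx, zero_smul, zero_add]
    apply (convex_convexHull ℝ _).sum_mem
    · intro j hj
      exact (hx' j (Finset.ne_of_mem_erase hj)).le
    · have h2 := b.sum_coord_apply_eq_one x
      rwa [← Finset.add_sum_erase _ _ (Finset.mem_univ i), hx, zero_add] at h2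
    · intro j hj
      exact subset_convexHull ℝ _ ⟨j, Finset.ne_of_mem_erase hj, rfl⟩
  set q : E3 := p - (b.coord i p / ⟪g i, g i⟫) • g i with hq
  have hqc : ∀ j, b.coord j q = b.coord j p - b.coord i p / ⟪g i, g i⟫ * ⟪g j, g i⟫ := by
    intro j
    have h1 := hg j p q
    have h2 : p - q = (b.coord i p / ⟪g i, g i⟫) • g i := by rw [hq]; abel
    rw [h2, inner_smul_right] at h1
    linarith
  have hqi : b.coord i q = 0 := by rw [hqc]; field_simp; ring
  have hqj : ∀ j, j ≠ i → 0 < b.coord j q := fun j hj => by rw [hqc]; exact hpos j hj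
  refine ⟨q, ?_, ?_⟩
  · rw [mem_intrinsicInterior]
    have hmem := convexHull_subset_affineSpan _ (hhull q hqi hqj)
    have hmem' : q ∈ affineSpan ℝ (convexHull ℝ (b '' {i}ᶜ)) := by rwa [affineSpan_convexHull]
    refine ⟨⟨q, hmem'⟩, ?_, rfl⟩
    rw [mem_interior]
    refine ⟨{y | ∀ j, j ≠ i → 0 < b.coord j (y : E3)}, ?_, ?_, hqj⟩
    · rintro ⟨y, hy⟩ hy'
      rw [affineSpan_convexHull] at hy
      exact hhull y (hspan y hy) hy'
    · simp only [Set.ofPred_forall]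
      refine isOpen_iInter_of_finite fun j => isOpen_iInter_of_finite fun _ => ?_
      exact isOpen_lt continuous_const
        ((b.coord j).continuous_of_finiteDimensional.comp continuous_subtype_val)
  · intro w hw
    have h2 : p - q = (b.coord i p / ⟪g i, g i⟫) • g i := by rw [hq]; abel
    rw [h2, inner_smul_left]
    suffices ⟪g i, w⟫ = 0 by simp [this]
    have hne : (b.coord i).linear w = 0 := by
      have : w +ᵥ q ∈ affineSpan ℝ (b '' {i}ᶜ) :=
        AffineSubspace.vadd_mem_of_mem_direction hw
          (convexHull_subset_affineSpan _ (hhull q hqi hqj))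
      have h3 := hspan _ this
      rw [AffineMap.map_vadd, hqi] at h3
      simpa using h3
    have h4 := hg i (w +ᵥ q) q
    rw [AffineMap.map_vadd, hne] at h4
    simpa using h4

/-- Obtuseness of an edge from the dual vectors. -/
theorem obtuse_of_inner (P Q R S gR gS : E3) (hPQ : Q - P ≠ 0)
    (hspan : ∀ x : E3, ⟪x, Q - P⟫ = 0 → ⟪x, R - P⟫ = 0 → ⟪x, S - P⟫ = 0 → x = 0)
    (h1 : ⟪gR, Q - P⟫ = 0) (h2 : ⟪gR, R - P⟫ = 1) (h3 : ⟪gR, S - P⟫ = 0)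
    (h4 : ⟪gS, Q - P⟫ = 0) (h5 : ⟪gS, R - P⟫ = 0) (h6 : ⟪gS, S - P⟫ = 1)
    (hpos : 0 < ⟪gR, gS⟫) : ObtuseEdge P Q R S := by
  unfold ObtuseEdge
  generalize hu : Q - P = u at *
  generalize hr : R - P = r at *
  generalize hs : S - P = s at *
  have hu0 : ⟪u, u⟫ ≠ 0 := by simpa using hPQ
  set r' := r - (⟪r, u⟫ / ⟪u, u⟫) • u with hr'
  set s' := s - (⟪s, u⟫ / ⟪u, u⟫) • u with hs'
  have er : r = r' + (⟪r, u⟫ / ⟪u, u⟫) • u := by rw [hr']; abel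
  have es : s = s' + (⟪s, u⟫ / ⟪u, u⟫) • u := by rw [hs']; abel
  have hru : ⟪r', u⟫ = 0 := by
    rw [hr', inner_sub_left, inner_smul_left]; simp only [conj_trivial]; field_simp; ring
  have hsu : ⟪s', u⟫ = 0 := by
    rw [hs', inner_sub_left, inner_smul_left]; simp only [conj_trivial]; field_simp; ring
  clear_value r' s'
  have h2' : ⟪gR, r'⟫ = 1 := by
    rw [hr', inner_sub_right, inner_smul_right, h1, h2]; ring
  have h3' : ⟪gR, s'⟫ = 0 := by
    rw [hs', inner_sub_right, inner_smul_right, h1, h3]; ring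
  have h5' : ⟪gS, r'⟫ = 0 := by
    rw [hr', inner_sub_right, inner_smul_right, h4, h5]; ring
  have h6' : ⟪gS, s'⟫ = 1 := by
    rw [hs', inner_sub_right, inner_smul_right, h4, h6]; ring
  have hsym : ⟪s', r'⟫ = ⟪r', s'⟫ := real_inner_comm _ _
  have key : (⟪r', r'⟫ * ⟪s', s'⟫ - ⟪r', s'⟫ * ⟪r', s'⟫) • gR
      - (⟪s', s'⟫ • r' - ⟪r', s'⟫ • s') = 0 := by
    apply hspan
    · simp only [inner_sub_left, inner_smul_left, conj_trivial, h1, hru, hsu]; ring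
    · rw [er]
      simp only [inner_sub_left, inner_smul_left, inner_add_right, inner_smul_right,
        conj_trivial, h1, hru, hsu, h2', hsym]; ring
    · rw [es]
      simp only [inner_sub_left, inner_smul_left, inner_add_right, inner_smul_right,
        conj_trivial, h1, hru, hsu, h3']; ring
  have kS := congrArg (fun x => ⟪gS, x⟫) key
  have kR := congrArg (fun x => ⟪gR, x⟫) key
  simp only [inner_sub_right, inner_smul_right, h2', h3', h5', h6', inner_zero_right] at kS kR
  rw [real_inner_comm gR gS] at kS
  have hcs : ⟪r', s'⟫ * ⟪r', s'⟫ ≤ ⟪r', r'⟫ * ⟪s', s'⟫ := real_inner_mul_inner_self_le _ _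
  have hs0 : s' ≠ 0 := by rintro rfl; simp at h6'
  have hss : 0 < ⟪s', s'⟫ := real_inner_self_pos.mpr hs0
  have hD : 0 < ⟪r', r'⟫ * ⟪s', s'⟫ - ⟪r', s'⟫ * ⟪r', s'⟫ := by
    rcases (sub_nonneg.mpr hcs).lt_or_eq with h | h
    · exact h
    · rw [← h] at kR; linarith
  have := mul_pos hD hpos
  linarith

/-- **A loadable tetrahedron has an obtuse path**: if there is a point `p` in the
interior of the tetrahedron `ABCD` such that the tetrahedron with load `p` is
stable on exactly one face, then the vertices can be relabeled `a, b, c, d` (via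
a permutation `σ`) so that the edges `ab`, `bc` and `cd` are all obtuse. -/
theorem loadable_tetrahedron_has_obtuse_path (A B C D : E3)
    (h : AffineIndependent ℝ ![A, B, C, D])
    (hload : ∃ p ∈ interior (convexHull ℝ ({A, B, C, D} : Set E3)),
      ∃! i : Fin 4, FaceStable A B C D p i) :
    ∃ σ : Equiv.Perm (Fin 4),
      ObtuseEdge (![A, B, C, D] (σ 0)) (![A, B, C, D] (σ 1))
        (![A, B, C, D] (σ 2)) (![A, B, C, D] (σ 3)) ∧
      ObtuseEdge (![A, B, C, D] (σ 1)) (![A, B, C, D] (σ 2))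
        (![A, B, C, D] (σ 0)) (![A, B, C, D] (σ 3)) ∧
      ObtuseEdge (![A, B, C, D] (σ 2)) (![A, B, C, D] (σ 3))
        (![A, B, C, D] (σ 0)) (![A, B, C, D] (σ 1)) := by
  obtain ⟨p, hp, s, -, hs⟩ := hload
  have htop : affineSpan ℝ (Set.range ![A, B, C, D]) = ⊤ := by
    rw [h.affineSpan_eq_top_iff_card_eq_finrank_add_one]; simp
  set b : AffineBasis (Fin 4) ℝ E3 := ⟨![A, B, C, D], h, htop⟩ with hb
  have hbv : ∀ i, ![A, B, C, D] i = b i := fun i => rfl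
  have hrange : ({A, B, C, D} : Set E3) = Set.range b := by
    have : Set.range b = Set.range ![A, B, C, D] := rfl
    rw [this]
    ext x
    simp only [Set.mem_range, Fin.exists_fin_succ, Set.mem_insert_iff, Set.mem_singleton_iff]
    simp [eq_comm]
  have hl : ∀ i, 0 < b.coord i p := by
    rw [hrange, b.interior_convexHull] at hp; exact hp
  set g : Fin 4 → E3 := fun i =>
    (InnerProductSpace.toDual ℝ E3).symm (LinearMap.toContinuousLinearMap (b.coord i).linear)
    with hgdef
  have hgw : ∀ i w, ⟪g i, w⟫ = (b.coord i).linear w := by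
    intro i w
    simp [hgdef]
  have hg : ∀ i x y, ⟪g i, x - y⟫ = b.coord i x - b.coord i y := by
    intro i x y
    rw [hgw]
    exact (b.coord i).linearMap_vsub x y
  clear_value g
  have hgij : ∀ i j k, ⟪g i, b j - b k⟫ = (if i = j then 1 else 0) - (if i = k then 1 else 0) := by
    intro i j k
    rw [hg, b.coord_apply, b.coord_apply]
  have hspan : ∀ x : E3, ∀ k, (∀ j, j ≠ k → ⟪x, b j - b k⟫ = 0) → x = 0 := by
    intro x k hx
    have hxx : ⟪x, x⟫ = 0 := by
      have e : x = ∑ j, (b.coord j (x + b k)) • (b j - b k) := by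
        simp only [smul_sub, Finset.sum_sub_distrib]
        rw [b.linear_combination_coord_eq_self, ← Finset.sum_smul,
          b.sum_coord_apply_eq_one]
        simp
      have e' : ⟪x, x⟫ = ⟪∑ j, (b.coord j (x + b k)) • (b j - b k), x⟫ := by rw [← e]
      rw [e', sum_inner]
      apply Finset.sum_eq_zero
      intro j _
      rw [inner_smul_left]
      by_cases hj : j = k
      · simp [hj]
      · rw [real_inner_comm, hx j hj]; simp
    simpa using hxx
  have hne : ∀ i, g i ≠ 0 := by
    intro i h0
    obtain ⟨j, hj⟩ : ∃ j : Fin 4, i ≠ j := ⟨i + 1, by clear h0; revert i; decide⟩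
    have := hgij i i j
    rw [h0] at this
    simp [hj] at this
  have hgg : ∀ i, 0 < ⟪g i, g i⟫ := fun i => real_inner_self_pos.mpr (hne i)
  have hgsum : ∑ j, g j = 0 := by
    apply hspan _ 0
    intro j _
    rw [sum_inner]
    simp [hgij]
  have hcs : ∀ i j, i ≠ j → ⟪g i, g j⟫ < ‖g i‖ * ‖g j‖ := by
    intro i j hij
    refine lt_of_le_of_ne (real_inner_le_norm _ _) fun heq => ?_
    rw [inner_eq_norm_mul_iff_real] at heq
    obtain ⟨k, hki, hkj⟩ : ∃ k : Fin 4, i ≠ k ∧ j ≠ k := by clear heq; revert i j; decide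
    have := congrArg (fun x => ⟪x, b i - b k⟫) heq
    simp only [inner_smul_left, hgij] at this
    simp [hij.symm, hki, hkj, hne] at this
  have hface : ∀ i, (∀ j, j ≠ i →
      0 < b.coord j p - b.coord i p / ⟪g i, g i⟫ * ⟪g j, g i⟫) → FaceStable A B C D p i := by
    intro i hi
    fin_cases i
    · refine stable_of_coord b g hg p 0 B C D ?_ (hgg 0).ne' hi
      rw [show ({0}ᶜ : Set (Fin 4)) = {1, 2, 3} by ext x; fin_cases x <;> simp]
      simp [Set.image_insert_eq, ← hbv]
    · refine stable_of_coord b g hg p 1 A C D ?_ (hgg 1).ne' hi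
      rw [show ({1}ᶜ : Set (Fin 4)) = {0, 2, 3} by ext x; fin_cases x <;> simp]
      simp [Set.image_insert_eq, ← hbv]
    · refine stable_of_coord b g hg p 2 A B D ?_ (hgg 2).ne' hi
      rw [show ({2}ᶜ : Set (Fin 4)) = {0, 1, 3} by ext x; fin_cases x <;> simp]
      simp [Set.image_insert_eq, ← hbv]
    · refine stable_of_coord b g hg p 3 A B C ?_ (hgg 3).ne' hi
      rw [show ({3}ᶜ : Set (Fin 4)) = {0, 1, 2} by ext x; fin_cases x <;> simp]
      simp [Set.image_insert_eq, ← hbv]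
  obtain ⟨σ, hσ1, hσ2, hσ3⟩ := comb_core (fun i j => 0 < ⟪g i, g j⟫)
    (fun i => b.coord i p / ‖g i‖) s
    (fun i j hij => by rw [real_inner_comm]; exact hij)
    (by
      intro i his
      have hns : ¬ FaceStable A B C D p i := fun hf => his (hs i hf)
      obtain ⟨j, hji, hj⟩ : ∃ j, j ≠ i ∧
          b.coord j p - b.coord i p / ⟪g i, g i⟫ * ⟪g j, g i⟫ ≤ 0 := by
        by_contra hcon
        push Not at hcon
        exact hns (hface i hcon)
      have hle : b.coord j p * ⟪g i, g i⟫ ≤ b.coord i p * ⟪g i, g j⟫ := by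
        rw [real_inner_comm (g i) (g j), sub_nonpos, div_mul_eq_mul_div, le_div_iff₀ (hgg i)] at hj
        exact hj
      have hO : 0 < ⟪g i, g j⟫ := by
        by_contra hcon
        have h1 := mul_pos (hl j) (hgg i)
        have h2 := mul_nonpos_of_nonneg_of_nonpos (hl i).le (not_lt.mp hcon)
        linarith
      refine ⟨j, hji, hO, ?_⟩
      have hni : 0 < ‖g i‖ := norm_pos_iff.mpr (hne i)
      have hnj : 0 < ‖g j‖ := norm_pos_iff.mpr (hne j)
      rw [div_lt_div_iff₀ hnj hni]
      have h3 := mul_lt_mul_of_pos_left (hcs i j hji.symm) (hl i)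
      rw [real_inner_self_eq_norm_mul_norm] at hle
      have h4 : (b.coord j p * ‖g i‖) * ‖g i‖ < (b.coord i p * ‖g j‖) * ‖g i‖ := by linarith
      exact lt_of_mul_lt_mul_right h4 hni.le)
    (by
      intro i
      by_contra hcon
      push Not at hcon
      have h0 : ∑ j, ⟪g i, g j⟫ = 0 := by rw [← inner_sum, hgsum, inner_zero_right]
      have h1 : 0 < ∑ j, ⟪g i, g j⟫ := by
        apply Finset.sum_pos _ ⟨i, Finset.mem_univ i⟩
        intro j _
        by_cases hj : j = i
        · rw [hj]; exact hgg i
        · exact hcon j hj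
      linarith)
  have hob : ∀ i j k l : Fin 4, i ≠ j → i ≠ k → i ≠ l → j ≠ k → j ≠ l → k ≠ l →
      0 < ⟪g k, g l⟫ → ObtuseEdge (b i) (b j) (b k) (b l) := by
    intro i j k l hij hik hil hjk hjl hkl hpos
    have hall : ∀ t, t = i ∨ t = j ∨ t = k ∨ t = l := by
      clear * - hij hik hil hjk hjl hkl
      revert i j k l; decide
    refine obtuse_of_inner _ _ _ _ (g k) (g l) ?_ ?_ ?_ ?_ ?_ ?_ ?_ ?_ hpos
    · intro h0
      have := hgij j j i
      rw [h0] at this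
      simp [hij.symm] at this
    · intro x h1 h2 h3
      apply hspan x i
      intro t ht
      rcases hall t with rfl | rfl | rfl | rfl
      · exact absurd rfl ht
      · exact h1
      · exact h2
      · exact h3
    all_goals simp [hgij, hik.symm, hil.symm, hjk.symm, hjl.symm, hkl, hkl.symm]
  have hne' : ∀ x y : Fin 4, x ≠ y → σ x ≠ σ y := fun x y hxy => σ.injective.ne hxy
  refine ⟨σ, ?_, ?_, ?_⟩
  · exact hob _ _ _ _ (hne' _ _ (by decide)) (hne' _ _ (by decide)) (hne' _ _ (by decide))
      (hne' _ _ (by decide)) (hne' _ _ (by decide)) (hne' _ _ (by decide)) hσ1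
  · exact hob _ _ _ _ (hne' _ _ (by decide)) (hne' _ _ (by decide)) (hne' _ _ (by decide))
      (hne' _ _ (by decide)) (hne' _ _ (by decide)) (hne' _ _ (by decide)) hσ2
  · exact hob _ _ _ _ (hne' _ _ (by decide)) (hne' _ _ (by decide)) (hne' _ _ (by decide))
      (hne' _ _ (by decide)) (hne' _ _ (by decide)) (hne' _ _ (by decide)) hσ3
end
end

section
/- Fix a tetrahedron with vertices a, b, c, d whose edges ab, bc, cd are all obtuse, and fix one of the four falling patterns along the face chain C–D–A–B (an assignment of a unique stable sink face S together with, for each other face, the tipping direction along the chain toward S). Then the loading zone of this pattern — the set of interior points p such that the tetrahedron with load p is stable on S and on no other face, and every other face tips over the appropriate shared edge toward S along the chain — is the interior of a tetrahedron, i.e. it equals the interior of the convex hull of some four affinely independent points. -/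
open RealInnerProductSpace

noncomputable section

/-- The four falling patterns along the face chain `C–D–A–B` of the tetrahedron
`abcd`, where `A = bcd`, `B = acd`, `C = abd`, `D = abc` are the faces opposite
`a, b, c, d` (so `C, D` share edge `ab`, `D, A` share `bc`, and `A, B` share `cd`).
The pattern with index `k` has the `k`-th face of the chain `C, D, A, B` as its
unique stable (sink) face, and every other face tips over the shared edge onto
the next face along the chain in the direction of the sink:
`0 ↦ C←D←A←B`, `1 ↦ C→D←A←B`, `2 ↦ C→D→A←B`, `3 ↦ C→D→A→B`. -/
def FallingPattern (a b c d p : E3) : Fin 4 → Prop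
  | 0 => -- sink C : C←D←A←B
      StableOn p a b d ∧ ¬ StableOn p a b c ∧ ¬ StableOn p b c d ∧ ¬ StableOn p a c d ∧
      TipsOver p c a b ∧ TipsOver p d b c ∧ TipsOver p a c d
  | 1 => -- sink D : C→D←A←B
      StableOn p a b c ∧ ¬ StableOn p a b d ∧ ¬ StableOn p b c d ∧ ¬ StableOn p a c d ∧
      TipsOver p d a b ∧ TipsOver p d b c ∧ TipsOver p a c d
  | 2 => -- sink A : C→D→A←B
      StableOn p b c d ∧ ¬ StableOn p a b d ∧ ¬ StableOn p a b c ∧ ¬ StableOn p a c d ∧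
      TipsOver p d a b ∧ TipsOver p a b c ∧ TipsOver p a c d
  | 3 => -- sink B : C→D→A→B
      StableOn p a c d ∧ ¬ StableOn p a b d ∧ ¬ StableOn p a b c ∧ ¬ StableOn p b c d ∧
      TipsOver p d a b ∧ TipsOver p a b c ∧ TipsOver p b c d

/-- `i, j, k, l` are the four elements of `Fin 4` in some order. -/
def Quad (i j k l : Fin 4) : Prop :=
  i ≠ j ∧ i ≠ k ∧ i ≠ l ∧ j ≠ k ∧ j ≠ l ∧ k ≠ l

lemma Quad.univ_eq {i j k l : Fin 4} (h : Quad i j k l) :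
    (Finset.univ : Finset (Fin 4)) = {i, j, k, l} := by
  unfold Quad at h
  revert i j k l
  decide

lemma Quad.sum {i j k l : Fin 4} (h : Quad i j k l) {M : Type*} [AddCommMonoid M]
    (f : Fin 4 → M) : ∑ m, f m = f i + (f j + (f k + f l)) := by
  rw [h.univ_eq]
  obtain ⟨h1, h2, h3, h4, h5, h6⟩ := h
  rw [Finset.sum_insert (by simp [*]), Finset.sum_insert (by simp [*]),
    Finset.sum_insert (by simp [*]), Finset.sum_singleton]

abbrev AB := AffineBasis (Fin 4) ℝ E3

/-- gradient of the `i`-th barycentric coordinate -/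
def grad (b : AB) (i : Fin 4) : E3 :=
  (InnerProductSpace.toDual ℝ E3).symm (LinearMap.toContinuousLinearMap (b.coord i).linear)

lemma grad_inner (b : AB) (i : Fin 4) (v : E3) : ⟪grad b i, v⟫ = (b.coord i).linear v := by
  simp [grad]

lemma grad_inner_sub (b : AB) (i : Fin 4) (p q : E3) :
    ⟪grad b i, p - q⟫ = b.coord i p - b.coord i q := by
  rw [grad_inner]
  have := (b.coord i).linearMap_vsub p q
  simpa using this

lemma coord_add (b : AB) (i : Fin 4) (p v : E3) :
    b.coord i (p + v) = b.coord i p + ⟪grad b i, v⟫ := by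
  have := grad_inner_sub b i (p + v) p
  rw [add_sub_cancel_left] at this
  linarith

lemma grad_sum (b : AB) (v : E3) : ∑ m, ⟪grad b m, v⟫ = 0 := by
  have h1 := b.sum_coord_apply_eq_one (0 + v)
  have h2 := b.sum_coord_apply_eq_one 0
  simp only [coord_add, Finset.sum_add_distrib] at h1
  linarith

lemma grad_expand (b : AB) (v : E3) : ∑ m, ⟪grad b m, v⟫ • b m = v := by
  have h1 := b.linear_combination_coord_eq_self (0 + v)
  have h2 := b.linear_combination_coord_eq_self 0
  simp only [coord_add, add_smul, Finset.sum_add_distrib, h2] at h1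
  simpa using h1

lemma eq_zero_of_orth (b : AB) {i j k l : Fin 4} (hq : Quad i j k l) (v : E3)
    (h0 : ⟪grad b i, v⟫ = 0) (h1 : ⟪v, b k - b j⟫ = 0) (h2 : ⟪v, b l - b j⟫ = 0) : v = 0 := by
  have e := grad_expand b v
  have s := grad_sum b v
  rw [hq.sum] at e s
  rw [inner_sub_right] at h1 h2
  have : ⟪v, v⟫ = 0 := by
    nth_rw 2 [← e]
    simp only [inner_add_right, inner_smul_right, h0]
    have e1 : ⟪v, b k⟫ = ⟪v, b j⟫ := by linarith
    have e2 : ⟪v, b l⟫ = ⟪v, b j⟫ := by linarith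
    rw [e1, e2]
    rw [h0] at s
    linear_combination ⟪v, b j⟫ * s
  exact inner_self_eq_zero.mp this

lemma eq_zero_of_orth' (b : AB) {i j k l : Fin 4} (hq : Quad i j k l) (v : E3)
    (h0 : ⟪v, b i - b j⟫ = 0) (h1 : ⟪v, b k - b j⟫ = 0) (h2 : ⟪v, b l - b j⟫ = 0) : v = 0 := by
  have e := grad_expand b v
  have s := grad_sum b v
  rw [hq.sum] at e s
  rw [inner_sub_right] at h0 h1 h2
  have : ⟪v, v⟫ = 0 := by
    nth_rw 2 [← e]
    simp only [inner_add_right, inner_smul_right]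
    have e0 : ⟪v, b i⟫ = ⟪v, b j⟫ := by linarith
    have e1 : ⟪v, b k⟫ = ⟪v, b j⟫ := by linarith
    have e2 : ⟪v, b l⟫ = ⟪v, b j⟫ := by linarith
    rw [e0, e1, e2]
    linear_combination ⟪v, b j⟫ * s
  exact inner_self_eq_zero.mp this

/-- Gram matrix of the gradients -/
def GG (b : AB) (i j : Fin 4) : ℝ := ⟪grad b i, grad b j⟫

lemma GG_symm (b : AB) (i j : Fin 4) : GG b i j = GG b j i := real_inner_comm _ _

lemma GG_pos (b : AB) (i : Fin 4) : 0 < GG b i i := by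
  unfold GG
  rw [real_inner_self_pos]
  intro h
  obtain ⟨j, hj⟩ := exists_ne i
  have := grad_inner_sub b i (b i) (b j)
  rw [h, b.coord_apply_eq, b.coord_apply_ne hj.symm] at this
  simp at this

lemma GG_cs (b : AB) (i j : Fin 4) : GG b i j * GG b i j ≤ GG b i i * GG b j j :=
  real_inner_mul_inner_self_le _ _

lemma GG_sum (b : AB) {i j k l : Fin 4} (hq : Quad i j k l) (m : Fin 4) :
    GG b i m + (GG b j m + (GG b k m + GG b l m)) = 0 := by
  have := grad_sum b (grad b m)
  rwa [hq.sum] at this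

lemma mem_plane (b : AB) {i j k l : Fin 4} (hq : Quad i j k l) (q : E3) :
    q ∈ affineSpan ℝ ({b j, b k, b l} : Set E3) ↔ b.coord i q = 0 := by
  constructor
  · intro h
    refine affineSpan_induction (p := fun x => b.coord i x = 0) h ?_ ?_
    · intro x hx
      obtain ⟨h1, h2, h3, h4, h5, h6⟩ := hq
      rcases hx with rfl | rfl | rfl
      · exact b.coord_apply_ne h1
      · exact b.coord_apply_ne h2
      · exact b.coord_apply_ne h3
    · intro c u v w hu hv hw
      have : c • (u -ᵥ v) +ᵥ w = w + c • (u - v) := by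
        simp [add_comm]
      rw [this, coord_add, inner_smul_right, grad_inner_sub, hu, hv, hw]
      simp
  · intro h
    have := affineCombination_mem_affineSpan_image (k := ℝ) (s := Finset.univ)
      (w := fun m => b.coord m q) (b.sum_coord_apply_eq_one q) (s' := {j, k, l})
      (fun m _ hm => by
        have : m ∈ (Finset.univ : Finset (Fin 4)) := Finset.mem_univ _
        rw [hq.univ_eq] at this
        simp at this hm
        have : m = i := by tauto
        rw [this]; exact h) b
    rw [b.affineCombination_coord_eq_self] at this
    simpa [Set.image_insert_eq] using this

lemma mem_line (b : AB) {i j k l : Fin 4} (hq : Quad i j k l) (q : E3) :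
    q ∈ affineSpan ℝ ({b k, b l} : Set E3) ↔ b.coord i q = 0 ∧ b.coord j q = 0 := by
  constructor
  · intro h
    refine ⟨(mem_plane b hq q).1 (affineSpan_mono ℝ (by simp) h),
      (mem_plane b (i := j) (j := i) (k := k) (l := l) ?_ q).1 (affineSpan_mono ℝ (by simp) h)⟩
    obtain ⟨h1, h2, h3, h4, h5, h6⟩ := hq
    exact ⟨h1.symm, h4, h5, h2, h3, h6⟩
  · rintro ⟨h, h'⟩
    have := affineCombination_mem_affineSpan_image (k := ℝ) (s := Finset.univ)
      (w := fun m => b.coord m q) (b.sum_coord_apply_eq_one q) (s' := {k, l})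
      (fun m _ hm => by
        have : m ∈ (Finset.univ : Finset (Fin 4)) := Finset.mem_univ _
        rw [hq.univ_eq] at this
        simp at this hm
        have : m = i ∨ m = j := by tauto
        rcases this with rfl | rfl <;> assumption) b
    rw [b.affineCombination_coord_eq_self] at this
    simpa [Set.image_insert_eq] using this

/-- orthogonal projection onto the plane of face `i` -/
def prj (b : AB) (i : Fin 4) (p : E3) : E3 := p + (-(b.coord i p / GG b i i)) • grad b i

lemma coord_prj (b : AB) (i m : Fin 4) (p : E3) :
    b.coord m (prj b i p) = b.coord m p - b.coord i p / GG b i i * GG b i m := by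
  have e : ⟪grad b m, grad b i⟫ = GG b i m := by rw [GG_symm b i m, GG]
  rw [prj, coord_add, inner_smul_right, e]; ring

lemma coord_prj_self (b : AB) (i : Fin 4) (p : E3) : b.coord i (prj b i p) = 0 := by
  rw [coord_prj]
  have := GG_pos b i
  field_simp
  ring

lemma prj_orth (b : AB) {i j k l : Fin 4} (hq : Quad i j k l) (p : E3) :
    ∀ w ∈ (affineSpan ℝ ({b j, b k, b l} : Set E3)).direction, ⟪p - prj b i p, w⟫ = 0 := by
  intro w hw
  have hj : b j ∈ affineSpan ℝ ({b j, b k, b l} : Set E3) := subset_affineSpan _ _ (by simp)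
  have := AffineSubspace.vadd_mem_of_mem_direction hw hj
  rw [mem_plane b hq, vadd_eq_add, add_comm, coord_add, b.coord_apply_ne hq.1, zero_add] at this
  have e : p - prj b i p = (b.coord i p / GG b i i) • grad b i := by
    unfold prj; module
  rw [e, inner_smul_left, this]; simp

lemma prj_unique (b : AB) {i j k l : Fin 4} (hq : Quad i j k l) (p q : E3)
    (h : q ∈ affineSpan ℝ ({b j, b k, b l} : Set E3))
    (ho : ∀ w ∈ (affineSpan ℝ ({b j, b k, b l} : Set E3)).direction, ⟪p - q, w⟫ = 0) :
    q = prj b i p := by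
  have ho' := prj_orth b hq p
  have hd : ∀ x ∈ ({b j, b k, b l} : Set E3), ∀ y ∈ ({b j, b k, b l} : Set E3),
      x - y ∈ (affineSpan ℝ ({b j, b k, b l} : Set E3)).direction := by
    intro x hx y hy
    exact AffineSubspace.vsub_mem_direction (subset_affineSpan _ _ hx) (subset_affineSpan _ _ hy)
  rw [← sub_eq_zero]
  have hv : ∀ w ∈ (affineSpan ℝ ({b j, b k, b l} : Set E3)).direction,
      ⟪q - prj b i p, w⟫ = 0 := by
    intro w hw
    have e : q - prj b i p = (p - prj b i p) - (p - q) := by abel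
    rw [e, inner_sub_left, ho w hw, ho' w hw, sub_zero]
  refine eq_zero_of_orth b hq _ ?_ (hv _ (hd _ (by simp) _ (by simp)))
    (hv _ (hd _ (by simp) _ (by simp)))
  rw [grad_inner_sub, (mem_plane b hq q).1 h, coord_prj_self, sub_zero]

lemma tips_iff (b : AB) {i j k l : Fin 4} (hq : Quad i j k l) (p : E3) :
    TipsOver p (b j) (b k) (b l) ↔ GG b i i * b.coord j p < GG b i j * b.coord i p := by
  have hG := GG_pos b i
  have key : GG b i i * b.coord j p < GG b i j * b.coord i p ↔ b.coord j (prj b i p) < 0 := by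
    rw [coord_prj, sub_neg, div_mul_eq_mul_div, lt_div_iff₀ hG]
    constructor <;> intro h <;> linarith
  rw [key]
  constructor
  · rintro ⟨q, hq1, ho, ⟨p1, hp1, p2, hp2, hr⟩, hqs, has⟩
    have := prj_unique b hq p q hq1 ho
    rw [← this]
    have hz1 := ((mem_line b hq p1).1 hp1).2
    have hz2 := ((mem_line b hq p2).1 hp2).2
    rcases hr with h0 | h0 | ⟨r1, r2, hr1, hr2, he⟩
    · rw [vsub_eq_sub, sub_eq_zero] at h0
      exact absurd (h0 ▸ hp1) hqs
    · rw [vsub_eq_sub, sub_eq_zero] at h0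
      exact absurd (h0 ▸ hp2) has
    · have := congrArg (fun v => ⟪grad b j, v⟫) he
      simp only [vsub_eq_sub, inner_smul_right, grad_inner_sub, hz1, hz2, b.coord_apply_eq] at this
      by_contra hc
      push Not at hc
      nlinarith [mul_nonneg hr1.le hc]
  · intro hneg
    set q := prj b i p with hqdef
    have hci : b.coord i q = 0 := coord_prj_self b i p
    refine ⟨q, (mem_plane b hq q).2 hci, prj_orth b hq p, ?_⟩
    set t := b.coord j q with ht
    -- the point where the segment from `q` to the apex meets the line
    have h1t : (1 - t) ≠ 0 := by linarith
    have hm : b j + (1 / (1 - t)) • (q - b j) ∈ affineSpan ℝ ({b k, b l} : Set E3) := by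
      rw [mem_line b hq]
      simp only [coord_add, inner_smul_right, grad_inner_sub, b.coord_apply_eq,
        b.coord_apply_ne hq.1, hci, ← ht]
      constructor
      · simp
      · field_simp; ring
    refine AffineSubspace.sOppSide_of_vsub_eq_smul hm hm (m := q - b j)
      (c₁ := 1 - 1 / (1 - t)) (c₂ := - (1 / (1 - t))) ?_ ?_ ?_ ?_ ?_
    · rw [vsub_eq_sub]; module
    · rw [vsub_eq_sub]; module
    · have h2 : 0 < 1 - t := by linarith
      have h3 : 0 < 1 / (1 - t) := by positivity
      have h4 : 1 / (1 - t) ≤ 1 := by rw [div_le_one h2]; linarith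
      nlinarith
    · rw [mem_line b hq]
      rintro ⟨_, h⟩; linarith
    · rw [mem_line b hq]
      rintro ⟨_, h⟩; simp at h

lemma stable_nonneg (b : AB) {i j k l : Fin 4} (hq : Quad i j k l) (p : E3)
    (h : StableOn p (b j) (b k) (b l)) (m : Fin 4) : 0 ≤ b.coord m (prj b i p) := by
  obtain ⟨q, hq1, ho⟩ := h
  have hc := intrinsicInterior_subset hq1
  rw [← prj_unique b hq p q (convexHull_subset_affineSpan _ hc) ho]
  have : q ∈ convexHull ℝ (Set.range b) := by
    refine convexHull_mono ?_ hc
    rintro x (rfl | rfl | rfl) <;> simp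
  rw [b.convexHull_eq_nonneg_coord] at this
  exact this m

lemma not_stable (b : AB) {i j k l : Fin 4} (hq : Quad i j k l) (p : E3) (m : Fin 4)
    (h : GG b i i * b.coord m p < GG b i m * b.coord i p) :
    ¬ StableOn p (b j) (b k) (b l) := by
  intro hs
  have := stable_nonneg b hq p hs m
  have hG := GG_pos b i
  rw [coord_prj, sub_nonneg, div_mul_eq_mul_div, div_le_iff₀ hG] at this
  linarith

lemma stable_of (b : AB) {i j k l : Fin 4} (hq : Quad i j k l) (p : E3)
    (hj : GG b i j * b.coord i p < GG b i i * b.coord j p)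
    (hk : GG b i k * b.coord i p < GG b i i * b.coord k p)
    (hl : GG b i l * b.coord i p < GG b i i * b.coord l p) :
    StableOn p (b j) (b k) (b l) := by
  have hG := GG_pos b i
  have key : ∀ m, GG b i m * b.coord i p < GG b i i * b.coord m p →
      0 < b.coord m (prj b i p) := by
    intro m hm
    rw [coord_prj, sub_pos, div_mul_eq_mul_div, div_lt_iff₀ hG]
    linarith
  refine ⟨prj b i p, ?_, prj_orth b hq p⟩
  rw [mem_intrinsicInterior]
  have hm : prj b i p ∈ affineSpan ℝ (convexHull ℝ ({b j, b k, b l} : Set E3)) := by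
    rw [affineSpan_convexHull, mem_plane b hq]
    exact coord_prj_self b i p
  refine ⟨⟨_, hm⟩, ?_, rfl⟩
  rw [mem_interior]
  have hcont : ∀ m, Continuous fun y : affineSpan ℝ (convexHull ℝ ({b j, b k, b l} : Set E3)) =>
      b.coord m (y : E3) := fun m =>
    ((b.coord m).continuous_of_finiteDimensional).comp continuous_subtype_val
  refine ⟨{y | 0 < b.coord j (y : E3)} ∩ ({y | 0 < b.coord k (y : E3)} ∩
    {y | 0 < b.coord l (y : E3)}), ?_, ?_, key j hj, key k hk, key l hl⟩
  · rintro ⟨y, hy⟩ ⟨h1, h2, h3⟩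
    simp only [Set.mem_ofPred_eq] at h1 h2 h3
    rw [affineSpan_convexHull, mem_plane b hq] at hy
    have e := b.linear_combination_coord_eq_self y
    have s := b.sum_coord_apply_eq_one y
    rw [hq.sum] at e s
    rw [hy] at e s
    rw [zero_smul, zero_add] at e
    rw [zero_add] at s
    change y ∈ convexHull ℝ ({b j, b k, b l} : Set E3)
    have hs := (convex_convexHull ℝ ({b j, b k, b l} : Set E3)).sum_mem (t := Finset.univ)
      (w := ![b.coord j y, b.coord k y, b.coord l y]) (z := ![b j, b k, b l])
      (by intro m _; fin_cases m <;> simp [h1.le, h2.le, h3.le])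
      (by simp [Fin.sum_univ_three]; linarith)
      (by intro m _; apply subset_convexHull; fin_cases m <;> simp)
    rw [← e]
    simpa [Fin.sum_univ_three, add_assoc] using hs
  · exact (isOpen_lt continuous_const (hcont j)).inter
      ((isOpen_lt continuous_const (hcont k)).inter (isOpen_lt continuous_const (hcont l)))

lemma obtuse_pos (b : AB) {i j k l : Fin 4} (hq : Quad i j k l)
    (h : ObtuseEdge (b k) (b l) (b i) (b j)) : 0 < GG b i j := by
  unfold ObtuseEdge at h
  obtain ⟨h1, h2, h3, h4, h5, h6⟩ := id hq
  set u := b l - b k with hu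
  have huu : ⟪u, u⟫ ≠ 0 := by
    intro h
    rw [inner_self_eq_zero, sub_eq_zero] at h
    exact h6 (b.ind.injective h).symm
  set R := (b i - b k) - (⟪b i - b k, u⟫ / ⟪u, u⟫) • u with hR
  set S := (b j - b k) - (⟪b j - b k, u⟫ / ⟪u, u⟫) • u with hS
  have hRu : ⟪R, u⟫ = 0 := by
    rw [hR, inner_sub_left, real_inner_smul_left, div_mul_cancel₀ _ huu, sub_self]
  have hSu : ⟪S, u⟫ = 0 := by
    rw [hS, inner_sub_left, real_inner_smul_left, div_mul_cancel₀ _ huu, sub_self]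
  have niu : ⟪grad b i, u⟫ = 0 := by
    rw [hu, grad_inner_sub, b.coord_apply_ne h3, b.coord_apply_ne h2, sub_zero]
  have nju : ⟪grad b j, u⟫ = 0 := by
    rw [hu, grad_inner_sub, b.coord_apply_ne h5, b.coord_apply_ne h4, sub_zero]
  have niR : ⟪grad b i, R⟫ = 1 := by
    rw [hR, inner_sub_right, inner_smul_right, niu, grad_inner_sub, b.coord_apply_eq,
      b.coord_apply_ne h2]; simp
  have njR : ⟪grad b j, R⟫ = 0 := by
    rw [hR, inner_sub_right, inner_smul_right, nju, grad_inner_sub, b.coord_apply_ne h1.symm,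
      b.coord_apply_ne h4]; simp
  have niS : ⟪grad b i, S⟫ = 0 := by
    rw [hS, inner_sub_right, inner_smul_right, niu, grad_inner_sub, b.coord_apply_ne h1,
      b.coord_apply_ne h2]; simp
  have njS : ⟪grad b j, S⟫ = 1 := by
    rw [hS, inner_sub_right, inner_smul_right, nju, grad_inner_sub, b.coord_apply_eq,
      b.coord_apply_ne h4]; simp
  have hz : R - ⟪R, R⟫ • grad b i - ⟪R, S⟫ • grad b j = 0 := by
    have a0 : ⟪R - ⟪R, R⟫ • grad b i - ⟪R, S⟫ • grad b j, u⟫ = 0 := by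
      simp only [inner_sub_left, inner_smul_left, hRu, niu, nju]; simp
    have a1 : ⟪R - ⟪R, R⟫ • grad b i - ⟪R, S⟫ • grad b j, R⟫ = 0 := by
      simp only [inner_sub_left, inner_smul_left, niR, njR]; simp
    have a2 : ⟪R - ⟪R, R⟫ • grad b i - ⟪R, S⟫ • grad b j, S⟫ = 0 := by
      simp only [inner_sub_left, inner_smul_left, niS, njS]; simp
    have eR : b i - b k = R + (⟪b i - b k, u⟫ / ⟪u, u⟫) • u := by rw [hR]; abel
    have eS : b j - b k = S + (⟪b j - b k, u⟫ / ⟪u, u⟫) • u := by rw [hS]; abel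
    refine eq_zero_of_orth' b (i := i) (j := k) (k := j) (l := l) ⟨h2, h1, h3, h4.symm, h6, h5⟩
      _ ?_ ?_ a0
    · rw [eR, inner_add_right, inner_smul_right, a0, a1]; simp
    · rw [eS, inner_add_right, inner_smul_right, a0, a2]; simp
  have hz2 := congrArg (fun v => ⟪grad b j, v⟫) hz
  simp only [inner_sub_right, inner_smul_right, njR, inner_zero_right] at hz2
  have hRR : 0 < ⟪R, R⟫ := by
    rw [real_inner_self_pos]
    intro h0
    rw [h0] at niR; simp at niR
  have hjj := GG_pos b j
  have e : ⟪R, R⟫ * GG b i j = -⟪R, S⟫ * GG b j j := by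
    rw [GG_symm b i j]
    unfold GG
    linarith
  have : 0 < ⟪R, R⟫ * GG b i j := by
    rw [e]; exact mul_pos (by linarith) hjj
  exact pos_of_mul_pos_right this hRR.le

lemma coord_comb (b : AB) {i j k l : Fin 4} (hq : Quad i j k l) (x y z w : ℝ) :
    b.coord i (x • b i + y • b j + z • b k + w • b l)
      = x + b.coord i 0 * (1 - (x + y + z + w)) := by
  obtain ⟨h1, h2, h3, h4, h5, h6⟩ := hq
  have key : ∀ v, ⟪grad b i, v⟫ = b.coord i v - b.coord i 0 := by
    intro v
    have := grad_inner_sub b i v 0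
    rwa [sub_zero] at this
  have := coord_add b i 0 (x • b i + y • b j + z • b k + w • b l)
  rw [zero_add] at this
  rw [this]
  simp only [inner_add_right, inner_smul_right]
  simp only [key, b.coord_apply_eq, b.coord_apply_ne h1,
    b.coord_apply_ne h2, b.coord_apply_ne h3]
  ring

lemma coords_comb (b : AB) {i j k l : Fin 4} (hq : Quad i j k l) (x y z w : ℝ) (p : E3)
    (hp : x • b i + y • b j + z • b k + w • b l = p) :
    b.coord i p = x + b.coord i 0 * (1 - (x + y + z + w)) ∧
    b.coord j p = y + b.coord j 0 * (1 - (x + y + z + w)) ∧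
    b.coord k p = z + b.coord k 0 * (1 - (x + y + z + w)) ∧
    b.coord l p = w + b.coord l 0 * (1 - (x + y + z + w)) := by
  obtain ⟨h1, h2, h3, h4, h5, h6⟩ := id hq
  refine ⟨?_, ?_, ?_, ?_⟩
  · rw [← hp, coord_comb b hq]
  · rw [← hp, show x • b i + y • b j + z • b k + w • b l
      = y • b j + x • b i + z • b k + w • b l by abel,
      coord_comb b (i := j) (j := i) (k := k) (l := l) ⟨h1.symm, h4, h5, h2, h3, h6⟩]
    ring
  · rw [← hp, show x • b i + y • b j + z • b k + w • b l
      = z • b k + x • b i + y • b j + w • b l by abel,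
      coord_comb b (i := k) (j := i) (k := j) (l := l) ⟨h2.symm, h4.symm, h6, h1, h3, h5⟩]
    ring
  · rw [← hp, show x • b i + y • b j + z • b k + w • b l
      = w • b l + x • b i + y • b j + z • b k by abel,
      coord_comb b (i := l) (j := i) (k := j) (l := k)
        ⟨h3.symm, h5.symm, h6.symm, h1, h2, h4⟩]
    ring

/-- The affine basis attached to four affinely independent points. -/
def mkAB (p : Fin 4 → E3) (h : AffineIndependent ℝ p) : AB :=
  ⟨p, h, by rw [h.affineSpan_eq_top_iff_card_eq_finrank_add_one]; simp⟩

lemma mkAB_apply (p : Fin 4 → E3) (h : AffineIndependent ℝ p) (i : Fin 4) :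
    mkAB p h i = p i := rfl

lemma range_four (w x y z : E3) : Set.range ![w, x, y, z] = {w, x, y, z} := by
  ext v
  simp only [Set.mem_range, Fin.exists_fin_succ, Set.mem_insert_iff, Set.mem_singleton_iff]
  simp [eq_comm]

lemma interior_four (w x y z : E3) (h : AffineIndependent ℝ ![w, x, y, z]) :
    interior (convexHull ℝ ({w, x, y, z} : Set E3))
      = {p | ∀ i, 0 < (mkAB _ h).coord i p} := by
  rw [← (mkAB _ h).interior_convexHull, ← range_four]
  rfl

lemma quad0 : Quad 0 1 2 3 := by unfold Quad; decide

lemma cone (b : AB) {i j k l : Fin 4} (hq : Quad i j k l) (r₁ r₂ s r₃ : ℝ)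
    (h₁ : 0 ≤ r₁) (h₂ : 0 ≤ r₂) (hs : 0 ≤ s) (h₃ : 0 ≤ r₃) :
    ∃ w x y z : E3, AffineIndependent ℝ ![w, x, y, z] ∧
      {p : E3 | 0 < b.coord i p ∧ r₁ * b.coord i p < b.coord j p ∧
        r₂ * b.coord i p + s * b.coord j p < b.coord k p ∧ r₃ * b.coord k p < b.coord l p}
        = interior (convexHull ℝ ({w, x, y, z} : Set E3)) := by
  obtain ⟨m, hm⟩ : ∃ m, m = s * r₁ + r₂ := ⟨_, rfl⟩
  have hm0 : 0 ≤ m := by rw [hm]; positivity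
  obtain ⟨N₀, hN₀⟩ : ∃ n, n * (1 + r₁ + m + r₃ * m) = 1 :=
    ⟨(1 + r₁ + m + r₃ * m)⁻¹, inv_mul_cancel₀ (by positivity)⟩
  obtain ⟨N₁, hN₁⟩ : ∃ n, n * (1 + s + r₃ * s) = 1 :=
    ⟨(1 + s + r₃ * s)⁻¹, inv_mul_cancel₀ (by positivity)⟩
  obtain ⟨N₂, hN₂⟩ : ∃ n, n * (1 + r₃) = 1 :=
    ⟨(1 + r₃)⁻¹, inv_mul_cancel₀ (by positivity)⟩
  have p0 : 0 < N₀ := pos_of_mul_pos_left (by rw [hN₀]; norm_num) (by positivity)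
  have p1 : 0 < N₁ := pos_of_mul_pos_left (by rw [hN₁]; norm_num) (by positivity)
  have p2 : 0 < N₂ := pos_of_mul_pos_left (by rw [hN₂]; norm_num) (by positivity)
  obtain ⟨W₀, hW₀⟩ : ∃ W, W = N₀ • (b i + r₁ • b j + m • b k + (r₃ * m) • b l) := ⟨_, rfl⟩
  obtain ⟨W₁, hW₁⟩ : ∃ W, W = N₁ • (b j + s • b k + (r₃ * s) • b l) := ⟨_, rfl⟩
  obtain ⟨W₂, hW₂⟩ : ∃ W, W = N₂ • (b k + r₃ • b l) := ⟨_, rfl⟩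
  have comb : ∀ y₀ y₁ y₂ y₃ : ℝ, ∀ p, y₀ • W₀ + y₁ • W₁ + y₂ • W₂ + y₃ • b l = p →
      (y₀ * N₀) • b i + (y₀ * N₀ * r₁ + y₁ * N₁) • b j
        + (y₀ * N₀ * m + y₁ * N₁ * s + y₂ * N₂) • b k
        + (r₃ * (y₀ * N₀ * m + y₁ * N₁ * s + y₂ * N₂) + y₃) • b l = p := by
    intro y₀ y₁ y₂ y₃ p hp
    rw [← hp, hW₀, hW₁, hW₂]
    module
  have tot : ∀ y₀ y₁ y₂ y₃ : ℝ, (y₀ * N₀) + (y₀ * N₀ * r₁ + y₁ * N₁)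
        + (y₀ * N₀ * m + y₁ * N₁ * s + y₂ * N₂)
        + (r₃ * (y₀ * N₀ * m + y₁ * N₁ * s + y₂ * N₂) + y₃) = y₀ + y₁ + y₂ + y₃ := by
    intro y₀ y₁ y₂ y₃
    linear_combination y₀ * hN₀ + y₁ * hN₁ + y₂ * hN₂
  have hind : AffineIndependent ℝ ![W₀, W₁, W₂, b l] := by
    rw [affineIndependent_iff_of_fintype]
    intro w hw0 hw
    rw [Finset.weightedVSub_eq_linear_combination _ hw0] at hw
    rw [Fin.sum_univ_four] at hw hw0
    simp only [Matrix.cons_val] at hw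
    have hc := comb _ _ _ _ _ hw
    have ht := tot (w 0) (w 1) (w 2) (w 3)
    rw [hw0] at ht
    obtain ⟨e0, e1, e2, e3⟩ := coords_comb b hq _ _ _ _ _ hc
    rw [ht] at e0 e1 e2 e3
    have f0 : w 0 = 0 := by
      have : w 0 * N₀ = 0 := by linarith
      exact (mul_eq_zero.1 this).resolve_right p0.ne'
    have f1 : w 1 = 0 := by
      rw [f0] at e1
      have : w 1 * N₁ = 0 := by linarith
      exact (mul_eq_zero.1 this).resolve_right p1.ne'
    have f2 : w 2 = 0 := by
      rw [f0, f1] at e2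
      have : w 2 * N₂ = 0 := by linarith
      exact (mul_eq_zero.1 this).resolve_right p2.ne'
    have f3 : w 3 = 0 := by
      rw [f0, f1, f2] at hw0
      linarith
    intro n
    fin_cases n <;> assumption
  refine ⟨W₀, W₁, W₂, b l, hind, ?_⟩
  rw [interior_four _ _ _ _ hind]
  ext p
  simp only [Set.mem_ofPred_eq]
  have e := (mkAB _ hind).linear_combination_coord_eq_self p
  have t := (mkAB _ hind).sum_coord_apply_eq_one p
  rw [Fin.sum_univ_four] at e t
  simp only [mkAB_apply, Matrix.cons_val] at e
  have hc := comb _ _ _ _ _ e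
  obtain ⟨e0, e1, e2, e3⟩ := coords_comb b hq _ _ _ _ _ hc
  rw [tot, t, sub_self, mul_zero, add_zero] at e0 e1 e2 e3
  generalize (mkAB _ hind).coord = y at *
  have a0 : b.coord i p = y 0 p * N₀ := e0
  have a1 : b.coord j p - r₁ * b.coord i p = y 1 p * N₁ := by rw [e0, e1]; ring
  have a2 : b.coord k p - (r₂ * b.coord i p + s * b.coord j p) = y 2 p * N₂ := by
    rw [e0, e1, e2, hm]; ring
  have a3 : b.coord l p - r₃ * b.coord k p = y 3 p := by rw [e2, e3]; ring
  rw [← sub_pos (b := r₁ * b.coord i p), ← sub_pos (b := r₂ * b.coord i p + s * b.coord j p),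
    ← sub_pos (b := r₃ * b.coord k p), a1, a2, a3, a0, mul_pos_iff_of_pos_right p0,
    mul_pos_iff_of_pos_right p1, mul_pos_iff_of_pos_right p2]
  constructor
  · rintro ⟨c0, c1, c2, c3⟩ n
    fin_cases n <;> assumption
  · intro hy
    exact ⟨hy 0, hy 1, hy 2, hy 3⟩

lemma div_lt_aux {A B x y : ℝ} (hB : 0 < B) : A / B * x < y ↔ A * x < B * y := by
  rw [div_mul_eq_mul_div, div_lt_iff₀ hB, mul_comm y B]

/-- Cauchy–Schwarz: if face `i` tips onto face `j`, then on face `j` the projection of the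
load is on the inner side of the common edge. -/
lemma back (b : AB) (i j : Fin 4) (p : E3) (hG : 0 < GG b i j) (hi : 0 < b.coord i p)
    (h : GG b i i * b.coord j p < GG b i j * b.coord i p) :
    GG b j i * b.coord j p < GG b j j * b.coord i p := by
  have hii := GG_pos b i
  have cs := GG_cs b i j
  rw [GG_symm b j i]
  have h1 := mul_lt_mul_of_pos_left h hG
  have h2 := mul_le_mul_of_nonneg_right cs hi.le
  refine lt_of_mul_lt_mul_left ?_ hii.le
  linarith

lemma neg_face_lt (b : AB) (i j : Fin 4) (p : E3) (hG : GG b i j < 0) (hi : 0 < b.coord i p)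
    (hj : 0 < b.coord j p) : GG b i j * b.coord i p < GG b i i * b.coord j p :=
  (mul_neg_of_neg_of_pos hG hi).trans (mul_pos (GG_pos b i) hj)

/-- **Loading zones are open tetrahedra**: fix a tetrahedron `abcd` whose edges
`ab`, `bc`, `cd` are all obtuse, and one of the four falling patterns `k` along
the face chain `C–D–A–B`.  Then the loading zone of that pattern — the set of
interior load points `p` for which the tetrahedron is stable exactly on the sink
face and every other face tips over the appropriate shared edge toward the sink —
is the interior of the convex hull of four affinely independent points. -/
theorem loading_zone_is_open_tetrahedron (a b c d : E3)
    (h : AffineIndependent ℝ ![a, b, c, d])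
    (hab : ObtuseEdge a b c d) (hbc : ObtuseEdge b c a d) (hcd : ObtuseEdge c d a b)
    (k : Fin 4) :
    ∃ w x y z : E3, AffineIndependent ℝ ![w, x, y, z] ∧
      {p : E3 | p ∈ interior (convexHull ℝ ({a, b, c, d} : Set E3)) ∧
          FallingPattern a b c d p k}
        = interior (convexHull ℝ ({w, x, y, z} : Set E3)) := by
  classical
  set B : AB := mkAB _ h with hB
  rw [interior_four _ _ _ _ h, ← hB]
  have ea : a = B 0 := rfl
  have eb : b = B 1 := rfl
  have ec : c = B 2 := rfl
  have ed : d = B 3 := rfl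
  rw [ea, eb, ec, ed] at hab hbc hcd
  have g23 : 0 < GG B 2 3 := obtuse_pos B (by unfold Quad; decide) hab
  have g03 : 0 < GG B 0 3 := obtuse_pos B (by unfold Quad; decide) hbc
  have g01 : 0 < GG B 0 1 := obtuse_pos B (by unfold Quad; decide) hcd
  have g32 : 0 < GG B 3 2 := by rwa [GG_symm]
  have g30 : 0 < GG B 3 0 := by rwa [GG_symm]
  have g10 : 0 < GG B 1 0 := by rwa [GG_symm]
  have s0 := GG_sum B quad0 0
  have s1 := GG_sum B quad0 1
  have s2 := GG_sum B quad0 2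
  have s3 := GG_sum B quad0 3
  have q0 := GG_pos B 0
  have q1 := GG_pos B 1
  have q2 := GG_pos B 2
  have q3 := GG_pos B 3
  have y02 := GG_symm B 0 2
  have y12 := GG_symm B 1 2
  have y13 := GG_symm B 1 3
  have y01 := GG_symm B 0 1
  have y03 := GG_symm B 0 3
  have y23 := GG_symm B 2 3
  have n02 : GG B 0 2 < 0 := by linarith
  have n13 : GG B 1 3 < 0 := by linarith
  have n12 : GG B 1 2 < 0 := by
    have : 0 ≤ GG B 0 0 + 2 * GG B 0 2 + GG B 2 2 := by
      have := real_inner_self_nonneg (x := grad B 0 + grad B 2)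
      simp only [inner_add_left, inner_add_right] at this
      change 0 ≤ GG B 0 0 + GG B 2 0 + (GG B 0 2 + GG B 2 2) at this
      linarith
    linarith
  have n20 : GG B 2 0 < 0 := by linarith
  have n31 : GG B 3 1 < 0 := by linarith
  have n21 : GG B 2 1 < 0 := by linarith
  -- the six possible tipping conditions
  have tCD := fun p => tips_iff B (i := 2) (j := 3) (k := 0) (l := 1) (by unfold Quad; decide) p
  have tDC := fun p => tips_iff B (i := 3) (j := 2) (k := 0) (l := 1) (by unfold Quad; decide) p
  have tDA := fun p => tips_iff B (i := 3) (j := 0) (k := 1) (l := 2) (by unfold Quad; decide) p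
  have tAD := fun p => tips_iff B (i := 0) (j := 3) (k := 1) (l := 2) (by unfold Quad; decide) p
  have tAB := fun p => tips_iff B (i := 0) (j := 1) (k := 2) (l := 3) (by unfold Quad; decide) p
  have tBA := fun p => tips_iff B (i := 1) (j := 0) (k := 2) (l := 3) (by unfold Quad; decide) p
  -- the four faces
  have fA : Quad 0 1 2 3 := quad0
  have fB : Quad 1 0 2 3 := by unfold Quad; decide
  have fC : Quad 2 0 1 3 := by unfold Quad; decide
  have fD : Quad 3 0 1 2 := by unfold Quad; decide
  have pos : ∀ {A B x y : ℝ}, 0 < A → 0 < B → 0 < x → A * x < B * y → 0 < y :=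
    fun hA hB hx hxy => pos_of_mul_pos_right ((mul_pos hA hx).trans hxy) hB.le
  fin_cases k
  · obtain ⟨w, x, y, z, hi, hz⟩ := cone B (i := 2) (j := 3) (k := 0) (l := 1)
      (by unfold Quad; decide) (GG B 3 3 / GG B 3 2) 0 (GG B 0 0 / GG B 0 3) (GG B 1 1 / GG B 1 0)
      (by positivity) le_rfl (by positivity) (by positivity)
    refine ⟨w, x, y, z, hi, ?_⟩
    rw [← hz]
    ext p
    simp only [Set.mem_ofPred_eq, zero_mul, zero_add, div_lt_aux g32, div_lt_aux g03,
      div_lt_aux g10]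
    simp only [FallingPattern]
    rw [ea, eb, ec, ed, tDC, tAD, tBA]
    constructor
    · rintro ⟨hp, -, -, -, -, h1, h2, h3⟩
      exact ⟨hp 2, h1, h2, h3⟩
    · rintro ⟨x2, h1, h2, h3⟩
      have x3 := pos q3 g32 x2 h1
      have x0 := pos q0 g03 x3 h2
      have x1 := pos q1 g10 x0 h3
      refine ⟨by intro n; fin_cases n <;> assumption, stable_of B fC p ?_ ?_ ?_,
        not_stable B fD p 2 h1, not_stable B fA p 3 h2, not_stable B fB p 0 h3, h1, h2, h3⟩
      · exact neg_face_lt B 2 0 p n20 x2 x0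
      · exact neg_face_lt B 2 1 p n21 x2 x1
      · exact back B 3 2 p g32 x3 h1
  · obtain ⟨w, x, y, z, hi, hz⟩ := cone B (i := 3) (j := 2) (k := 0) (l := 1)
      (by unfold Quad; decide) (GG B 2 2 / GG B 2 3) (GG B 0 0 / GG B 0 3) 0 (GG B 1 1 / GG B 1 0)
      (by positivity) (by positivity) le_rfl (by positivity)
    refine ⟨w, x, y, z, hi, ?_⟩
    rw [← hz]
    ext p
    simp only [Set.mem_ofPred_eq, zero_mul, add_zero, div_lt_aux g23, div_lt_aux g03,
      div_lt_aux g10]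
    simp only [FallingPattern]
    rw [ea, eb, ec, ed, tCD, tAD, tBA]
    constructor
    · rintro ⟨hp, -, -, -, -, h1, h2, h3⟩
      exact ⟨hp 3, h1, h2, h3⟩
    · rintro ⟨x3, h1, h2, h3⟩
      have x2 := pos q2 g23 x3 h1
      have x0 := pos q0 g03 x3 h2
      have x1 := pos q1 g10 x0 h3
      refine ⟨by intro n; fin_cases n <;> assumption, stable_of B fD p ?_ ?_ ?_,
        not_stable B fC p 3 h1, not_stable B fA p 3 h2, not_stable B fB p 0 h3, h1, h2, h3⟩
      · exact back B 0 3 p g03 x0 h2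
      · exact neg_face_lt B 3 1 p n31 x3 x1
      · exact back B 2 3 p g23 x2 h1
  · obtain ⟨w, x, y, z, hi, hz⟩ := cone B (i := 0) (j := 1) (k := 3) (l := 2)
      (by unfold Quad; decide) (GG B 1 1 / GG B 1 0) (GG B 3 3 / GG B 3 0) 0 (GG B 2 2 / GG B 2 3)
      (by positivity) (by positivity) le_rfl (by positivity)
    refine ⟨w, x, y, z, hi, ?_⟩
    rw [← hz]
    ext p
    simp only [Set.mem_ofPred_eq, zero_mul, add_zero, div_lt_aux g23, div_lt_aux g30,
      div_lt_aux g10]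
    simp only [FallingPattern]
    rw [ea, eb, ec, ed, tCD, tDA, tBA]
    constructor
    · rintro ⟨hp, -, -, -, -, h1, h2, h3⟩
      exact ⟨hp 0, h3, h2, h1⟩
    · rintro ⟨x0, h3, h2, h1⟩
      have x1 := pos q1 g10 x0 h3
      have x3 := pos q3 g30 x0 h2
      have x2 := pos q2 g23 x3 h1
      refine ⟨by intro n; fin_cases n <;> assumption, stable_of B fA p ?_ ?_ ?_,
        not_stable B fC p 3 h1, not_stable B fD p 0 h2, not_stable B fB p 0 h3, h1, h2, h3⟩
      · exact back B 1 0 p g10 x1 h3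
      · exact neg_face_lt B 0 2 p n02 x0 x2
      · exact back B 3 0 p g30 x3 h2
  · obtain ⟨w, x, y, z, hi, hz⟩ := cone B (i := 1) (j := 0) (k := 3) (l := 2)
      (by unfold Quad; decide) (GG B 0 0 / GG B 0 1) 0 (GG B 3 3 / GG B 3 0) (GG B 2 2 / GG B 2 3)
      (by positivity) le_rfl (by positivity) (by positivity)
    refine ⟨w, x, y, z, hi, ?_⟩
    rw [← hz]
    ext p
    simp only [Set.mem_ofPred_eq, zero_mul, zero_add, div_lt_aux g23, div_lt_aux g30,
      div_lt_aux g01]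
    simp only [FallingPattern]
    rw [ea, eb, ec, ed, tCD, tDA, tAB]
    constructor
    · rintro ⟨hp, -, -, -, -, h1, h2, h3⟩
      exact ⟨hp 1, h3, h2, h1⟩
    · rintro ⟨x1, h3, h2, h1⟩
      have x0 := pos q0 g01 x1 h3
      have x3 := pos q3 g30 x0 h2
      have x2 := pos q2 g23 x3 h1
      refine ⟨by intro n; fin_cases n <;> assumption, stable_of B fB p ?_ ?_ ?_,
        not_stable B fC p 3 h1, not_stable B fD p 0 h2, not_stable B fA p 1 h3, h1, h2, h3⟩
      · exact back B 0 1 p g01 x0 h3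
      · exact neg_face_lt B 1 2 p n12 x1 x2
      · exact neg_face_lt B 1 3 p n13 x1 x3
end
end
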